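/- Let X be one of the 23 Niemeier root systems, let π^X be its Coxeter Frame shape, let d^X be the number of irreducible components of X, and let Γ^X be the genus zero group attached to X. Then T^X = 1/η_{π^X} is the unique principal modulus for Γ^X satisfying T^X(τ) = q^{−1} − d^X + O(q) as τ → i∞. -/

import Mathlib

noncomputable section

open Topology MeasureTheory

/-- `e2 x = e^{2πix}`. -/
def e2 (x : ℂ) : ℂ := Complex.exp (2 * (Real.pi : ℂ) * Complex.I * x)

/-- The upper half-plane, viewed as a subset of `ℂ`. -/
def UHP : Set ℂ := {τ : ℂ | 0 < τ.im}
/-- The irreducible simply-laced (ADE) root systems; the natural number argument of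
`A`/`D` is the rank. -/
inductive ADE : Type
  | A : ℕ → ADE
  | D : ℕ → ADE
  | E6 : ADE
  | E7 : ADE
  | E8 : ADE
  deriving DecidableEq

namespace ADE

/-- Validity of the rank parameter: `A n` needs `n ≥ 1` and `D n` needs `n ≥ 4`. -/
def valid : ADE → Prop
  | A n => 1 ≤ n
  | D n => 4 ≤ n
  | _ => True

def isA : ADE → Bool | A _ => true | _ => false
def isD : ADE → Bool | D _ => true | _ => false
def isE6 : ADE → Bool | E6 => true | _ => false

def rank : ADE → ℕ
  | A n => n
  | D n => n
  | E6 => 6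
  | E7 => 7
  | E8 => 8

/-- The Coxeter number. -/
def cox : ADE → ℕ
  | A n => n + 1
  | D n => 2 * n - 2
  | E6 => 12
  | E7 => 18
  | E8 => 30

/-- The divisors `n_i` of the Coxeter number `m` such that `Ω^X = Σ_i Ω_m(n_i)`;
`Ω^{A_{m-1}} = Ω_m(1)`, `Ω^{D_{m/2+1}} = Ω_m(1) + Ω_m(m/2)`,
`Ω^{E6} = Ω_{12}(1)+Ω_{12}(4)+Ω_{12}(6)`, `Ω^{E7} = Ω_{18}(1)+Ω_{18}(6)+Ω_{18}(9)`,
`Ω^{E8} = Ω_{30}(1)+Ω_{30}(6)+Ω_{30}(10)+Ω_{30}(15)`. -/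
def omegaDivs (m : ℕ) : ADE → List ℕ
  | A _ => [1]
  | D _ => [1, m / 2]
  | E6 => [1, 4, 6]
  | E7 => [1, 6, 9]
  | E8 => [1, 6, 10, 15]

/-- The Coxeter Frame shape, as a list of pairs `(n_i, k_i)` standing for `∏ n_i^{k_i}`. -/
def frame : ADE → List (ℕ × ℤ)
  | A n => [(n + 1, 1), (1, -1)]
  | D n => [(2, 1), (2 * n - 2, 1), (1, -1), (n - 1, -1)]
  | E6 => [(2, 1), (3, 1), (12, 1), (1, -1), (4, -1), (6, -1)]
  | E7 => [(2, 1), (3, 1), (18, 1), (1, -1), (6, -1), (9, -1)]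
  | E8 => [(2, 1), (3, 1), (5, 1), (30, 1), (1, -1), (6, -1), (10, -1), (15, -1)]

end ADE

/-- The 23 Niemeier root systems, as unions (lists) of their irreducible components. -/
def NiemeierRootSystems : List (List ADE) :=
  [ List.replicate 24 (.A 1), List.replicate 12 (.A 2), List.replicate 8 (.A 3),
    List.replicate 6 (.A 4), [.A 5, .A 5, .A 5, .A 5, .D 4], List.replicate 4 (.A 6),
    [.A 7, .A 7, .D 5, .D 5], List.replicate 3 (.A 8), [.A 9, .A 9, .D 6],
    [.A 11, .D 7, .E6], [.A 12, .A 12], [.A 15, .D 9], [.A 17, .E7], [.A 24],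
    List.replicate 6 (.D 4), List.replicate 4 (.D 6), List.replicate 3 (.D 8),
    [.D 10, .E7, .E7], [.D 12, .D 12], [.D 16, .E8], [.D 24],
    List.replicate 4 .E6, List.replicate 3 .E8 ]

/-- The Coxeter number of a union of components (that of its first component). -/
def coxOf : List ADE → ℕ
  | [] => 0
  | C :: _ => C.cox

/-- The Coxeter Frame shape of a union of components. -/
def frameOf (X : List ADE) : List (ℕ × ℤ) := (X.map ADE.frame).flatten
/-- The Dedekind eta function `η(τ) = q^{1/24} ∏_{n ≥ 1} (1 - q^n)`. -/
def dedekindEta (τ : ℂ) : ℂ := e2 (τ / 24) * ∏' n : ℕ, (1 - e2 ((n + 1 : ℂ) * τ))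

/-- The Jacobi theta function
`θ₁(τ,z) = -i q^{1/8} y^{1/2} ∏_{n≥1} (1-q^n)(1-yq^n)(1-y⁻¹q^{n-1})`. -/
def jacobiTheta1 (τ z : ℂ) : ℂ :=
  -Complex.I * e2 (τ / 8) * e2 (z / 2) *
    ∏' n : ℕ, ((1 - e2 ((n + 1 : ℂ) * τ)) * (1 - e2 (z + (n + 1 : ℂ) * τ)) *
      (1 - e2 (-z + (n : ℂ) * τ)))

/-- The meromorphic Jacobi form `μ_{1,0}(τ,z) = -i θ₁(τ,2z) η(τ)³ / θ₁(τ,z)²` of weight 1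
and index 1. -/
def mu10 (τ z : ℂ) : ℂ :=
  -Complex.I * jacobiTheta1 τ (2 * z) * dedekindEta τ ^ 3 / jacobiTheta1 τ z ^ 2
/-- The weight 2 Eisenstein form
`λ_N(τ) = q∂_q log(η(Nτ)/η(τ)) = (N-1)/24 + Σ_{k>0} σ(k)(q^k - N q^{Nk})`. -/
def lambdaN (N : ℕ) (τ : ℂ) : ℂ :=
  ((N : ℂ) - 1) / 24 +
    ∑' k : ℕ, ((ArithmeticFunction.sigma 1) (k + 1) : ℂ) *
      (e2 ((k + 1 : ℂ) * τ) - (N : ℂ) * e2 ((N : ℂ) * (k + 1 : ℂ) * τ))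
/-- The eta product `η_π(τ) = ∏ η(n_i τ)^{k_i}` of a frame shape `π = ∏ n_i^{k_i}`. -/
def etaFrame (P : List (ℕ × ℤ)) (τ : ℂ) : ℂ :=
  (P.map fun p => dedekindEta ((p.1 : ℂ) * τ) ^ p.2).prod

/-- The lambda sum `λ_π = Σ_i k_i λ_{n_i}` of a frame shape `π = ∏ n_i^{k_i}`. -/
def lambdaFrame (P : List (ℕ × ℤ)) (τ : ℂ) : ℂ :=
  (P.map fun p => (p.2 : ℂ) * lambdaN p.1 τ).sum
/-- The subset `Γ0(N)+S = ∪_{e ∈ S} W_N(e)` of `SL₂(ℝ)`, where `W_N(e)` consists of the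
matrices `(1/√e)[[ae, b],[cN, de]]` with `a,b,c,d ∈ ℤ` and `ade - bc(N/e) = 1`.
In particular `GammaPlus N {1} = Γ0(N)`. -/
def GammaPlus (N : ℕ) (S : Set ℕ) : Set (Matrix.SpecialLinearGroup (Fin 2) ℝ) :=
  { g | ∃ e ∈ S, ∃ a b c d : ℤ,
      a * d * (e : ℤ) - b * c * ((N / e : ℕ) : ℤ) = 1 ∧
      (g : Matrix (Fin 2) (Fin 2) ℝ) =
        (Real.sqrt (e : ℝ))⁻¹ •
          !![(a : ℝ) * (e : ℝ), (b : ℝ); (c : ℝ) * (N : ℝ), (d : ℝ) * (e : ℝ)] }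

/-- The genus zero group `Γ^X` attached to a Niemeier root system `X`:
`Γ0(m)` if `X` has an A-type component (`m` the Coxeter number), `Γ0(2n)+n` if `X` has a
D-type but no A-type component and Coxeter number `2n`, `Γ0(12)+4` for `X = E6⁴` and
`Γ0(30)+6,10,15` for `X = E8³`. -/
def GammaX (X : List ADE) : Set (Matrix.SpecialLinearGroup (Fin 2) ℝ) :=
  if X.any ADE.isA then GammaPlus (coxOf X) {1}
  else if X.any ADE.isD then GammaPlus (coxOf X) {1, coxOf X / 2}
  else if X.any ADE.isE6 then GammaPlus 12 {1, 4}
  else GammaPlus 30 {1, 6, 10, 15}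

open scoped Manifold in
/-- `f` is a principal modulus (Hauptmodul) for `Γ ⊆ SL₂(ℝ)`: it is a `Γ`-invariant
holomorphic function on the upper half-plane generating the field of `Γ`-invariant
functions, i.e. inducing an isomorphism from `Γ\ℍ` onto the complement of a finite set
of points of the Riemann sphere; equivalently, `f` is injective on `Γ`-orbits and its
range is cofinite in `ℂ`. -/
def IsPrincipalModulus (Γ : Set (Matrix.SpecialLinearGroup (Fin 2) ℝ))
    (f : UpperHalfPlane → ℂ) : Prop :=
  MDifferentiable 𝓘(ℂ) 𝓘(ℂ) f ∧
  (∀ γ ∈ Γ, ∀ τ : UpperHalfPlane, f (γ • τ) = f τ) ∧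
  (∀ τ₁ τ₂ : UpperHalfPlane, f τ₁ = f τ₂ → ∃ γ ∈ Γ, γ • τ₁ = τ₂) ∧
  (Set.range f)ᶜ.Finite
/-- The expansion condition `T(τ) = q⁻¹ - d + O(q)` as `τ → i∞`, where `q = e^{2πiτ}`. -/
def HasOqExpansion (d : ℕ) (T : UpperHalfPlane → ℂ) : Prop :=
  UpperHalfPlane.IsBoundedAtImInfty fun τ : UpperHalfPlane =>
    (T τ - e2 (-(τ : ℂ)) + (d : ℂ)) * e2 (-(τ : ℂ))

/-- `T^X = 1/η_{π^X}`, the reciprocal of the eta product of the Coxeter Frame shape. -/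
def TX (X : List ADE) : UpperHalfPlane → ℂ := fun τ => (etaFrame (frameOf X) (τ : ℂ))⁻¹

namespace Niemeier
open UpperHalfPlane Filter Set
open scoped Manifold MatrixGroups

/-! ### Holomorphic functions on the upper half-plane -/

section Holomorphic

variable {T : ℍ → ℂ}

lemma analyticOnNhd_comp_ofComplex (hT : MDifferentiable 𝓘(ℂ) 𝓘(ℂ) T) :
    AnalyticOnNhd ℂ (T ∘ ofComplex) upperHalfPlaneSet :=
  (UpperHalfPlane.mdifferentiable_iff.mp hT).analyticOnNhd isOpen_upperHalfPlaneSet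

lemma isPreconnected_upperHalfPlaneSet : IsPreconnected upperHalfPlaneSet :=
  (convex_halfSpace_im_gt 0).isPreconnected

lemma isOpenMap_of_not_const (hT : MDifferentiable 𝓘(ℂ) 𝓘(ℂ) T)
    (hne : ¬ ∃ c, ∀ τ, T τ = c) : IsOpenMap T := by
  intro s hs
  rcases (analyticOnNhd_comp_ofComplex hT).is_constant_or_isOpen
    isPreconnected_upperHalfPlaneSet with ⟨c, hc⟩ | h
  · exact (hne ⟨c, fun τ => by simpa using hc τ τ.im_pos⟩).elim
  · have := h ((↑) '' s) (by rintro _ ⟨τ, -, rfl⟩; exact τ.im_pos)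
      (isOpenEmbedding_coe.isOpenMap s hs)
    rw [image_image] at this
    simpa using this

lemma countable_critical (hT : MDifferentiable 𝓘(ℂ) 𝓘(ℂ) T) (hne : ¬ ∃ c, ∀ τ, T τ = c) :
    {τ : ℍ | deriv (T ∘ ofComplex) τ = 0}.Countable := by
  have hF := analyticOnNhd_comp_ofComplex hT
  refine IsLindelof.countable (HereditarilyLindelofSpace.isLindelof _) ?_
  rw [discreteTopology_subtype_iff]
  intro τ hτ
  rw [← disjoint_iff, disjoint_principal_right]
  have hd : AnalyticAt ℂ (deriv (T ∘ ofComplex)) τ := (hF τ τ.im_pos).deriv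
  rcases hd.eventually_eq_zero_or_eventually_ne_zero with h | h
  · exfalso
    have h0 : EqOn (deriv (T ∘ ofComplex)) 0 upperHalfPlaneSet :=
      hF.deriv.eqOn_zero_of_preconnected_of_eventuallyEq_zero
        isPreconnected_upperHalfPlaneSet τ.im_pos h
    apply hne
    obtain ⟨c, hc⟩ := isOpen_upperHalfPlaneSet.exists_is_const_of_deriv_eq_zero
      isPreconnected_upperHalfPlaneSet hF.differentiableOn h0
    exact ⟨c, fun τ => by simpa using hc τ τ.im_pos⟩
  · have := (tendsto_nhdsWithin_iff.mpr ⟨(continuous_coe.tendsto τ).mono_left nhdsWithin_le_nhds,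
      eventually_mem_nhdsWithin.mono fun z (hz : z ≠ τ) h =>
        hz (UpperHalfPlane.ext h)⟩ :
      Tendsto ((↑) : ℍ → ℂ) (𝓝[≠] τ) (𝓝[≠] (τ : ℂ))).eventually h
    filter_upwards [this] with z hz using hz

lemma exists_nhds_injOn (hT : MDifferentiable 𝓘(ℂ) 𝓘(ℂ) T) {τ : ℍ}
    (h : deriv (T ∘ ofComplex) τ ≠ 0) : ∃ U ∈ 𝓝 τ, InjOn T U := by
  have hs : HasStrictDerivAt (T ∘ ofComplex) (deriv (T ∘ ofComplex) τ) τ :=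
    (analyticOnNhd_comp_ofComplex hT τ τ.im_pos).hasStrictDerivAt
  have := (continuous_coe.tendsto τ).eventually (hs.eventually_left_inverse h)
  refine ⟨_, this, fun x hx y hy hxy => ?_⟩
  simp only [Function.comp_apply, ofComplex_apply, mem_ofPred_eq] at hx hy
  rw [hxy, hy] at hx
  exact (UpperHalfPlane.ext hx).symm

end Holomorphic

/-! ### A criterion for principal moduli -/

lemma isClosed_orbitRel {Γ : Set SL(2, ℝ)} (hΓ : IsClosed Γ) :
    IsClosed {p : ℍ × ℍ | ∃ γ ∈ Γ, γ • p.1 = p.2} := by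
  have h := (ProperSMul.isProperMap_smul_pair (G := SL(2, ℝ)) (X := ℍ)).isClosedMap
    (Γ ×ˢ univ) (hΓ.prod isClosed_univ)
  convert h.preimage continuous_swap using 1
  ext ⟨x, y⟩
  simp only [mem_ofPred_eq, mem_preimage, Prod.swap_prod_mk, mem_image, mem_prod, mem_univ,
    and_true, Prod.mk.injEq, Prod.exists]
  constructor
  · rintro ⟨γ, hγ, h⟩; exact ⟨γ, x, hγ, h, rfl⟩
  · rintro ⟨γ, x', hγ, h, rfl⟩; exact ⟨γ, hγ, h⟩

/-- The vertical strip of the upper half-plane above height `1/2`. -/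
def strip : Set ℍ := {z | |z.re| ≤ 1 / 2 ∧ 1 / 2 ≤ z.im}

lemma isCompact_strip_le (Y : ℝ) : IsCompact (strip ∩ {z : ℍ | z.im ≤ Y}) := by
  rw [isEmbedding_coe.isCompact_iff]
  have : IsCompact (Icc (-(1 / 2) : ℝ) (1 / 2) ×ℂ Icc (1 / 2 : ℝ) Y) :=
    isCompact_Icc.reProdIm isCompact_Icc
  convert this using 1
  ext z
  simp only [strip, mem_image, mem_inter_iff, mem_ofPred_eq, Complex.mem_reProdIm, mem_Icc, abs_le]
  constructor
  · rintro ⟨w, ⟨⟨h1, h2⟩, h3⟩, rfl⟩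
    exact ⟨h1, h2, h3⟩
  · rintro ⟨h1, h2, h3⟩
    exact ⟨⟨z, by linarith⟩, ⟨⟨h1, h2⟩, h3⟩, rfl⟩

section Criterion

variable {Γ : Subgroup SL(2, ℝ)} {T : ℍ → ℂ} {ι : Type*} [Finite ι] {g : ι → ℍ → ℍ}

/-- Away from the limits of `T` at the cusps, the map induced by `T` on `Γ \ ℍ` is proper. -/
lemma exists_compact_of_not_cusp_value
    (hg : ∀ i, Continuous (g i))
    (hcover : ∀ τ, ∃ i, ∃ z ∈ strip, ∃ γ ∈ Γ, γ • g i z = τ)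
    (hinv : ∀ γ ∈ Γ, ∀ τ, T (γ • τ) = T τ) {B : Set ℂ}
    (hcusp : ∀ i, (∃ t ∈ B, Tendsto (T ∘ g i) atImInfty (𝓝 t)) ∨
      Tendsto (T ∘ g i) atImInfty (cocompact ℂ))
    {c : ℂ} (hc : c ∉ B) :
    ∃ K : Set ℍ, IsCompact K ∧ ∀ᶠ c' in 𝓝 c, ∀ τ, T τ = c' →
      ∃ τ' ∈ K, ∃ γ ∈ Γ, γ • τ' = τ := by
  have key : ∀ i, ∃ Y : ℝ, ∀ᶠ c' in 𝓝 c, ∀ z : ℍ, Y ≤ z.im → T (g i z) ≠ c' := by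
    intro i
    have : ∃ V ∈ 𝓝 c, ∀ᶠ z in atImInfty, T (g i z) ∉ V := by
      rcases hcusp i with ⟨t, ht, h⟩ | h
      · have hne : t ≠ c := fun h => hc (h ▸ ht)
        obtain ⟨U, V, hU, hV, hd⟩ := t2_separation_nhds hne
        exact ⟨V, hV, (h.eventually hU).mono fun z hz hz' => disjoint_left.mp hd hz hz'⟩
      · refine ⟨Metric.closedBall c 1, Metric.closedBall_mem_nhds c one_pos, ?_⟩
        exact h.eventually (isCompact_closedBall c 1).compl_mem_cocompact
    obtain ⟨V, hV, h⟩ := this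
    obtain ⟨Y, hY⟩ := (atImInfty_mem _).mp h
    exact ⟨Y, (eventually_mem_nhds_iff.mpr hV).mono fun c' hc' z hz h =>
      hY z hz (h ▸ mem_of_mem_nhds hc')⟩
  choose Y hY using key
  refine ⟨⋃ i, g i '' (strip ∩ {z | z.im ≤ Y i}),
    isCompact_iUnion fun i => (isCompact_strip_le _).image (hg i), ?_⟩
  filter_upwards [eventually_all.mpr hY] with c' hc' τ hτ
  obtain ⟨i, z, hz, γ, hγ, rfl⟩ := hcover τ
  rw [hinv γ hγ] at hτ
  refine ⟨g i z, mem_iUnion.mpr ⟨i, z, ⟨hz, ?_⟩, rfl⟩, γ, hγ, rfl⟩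
  by_contra h
  exact hc' i z (not_le.mp h).le hτ

lemma exists_norm_bound_of_not_near_infty
    (hg : ∀ i, Continuous (g i))
    (hcover : ∀ τ, ∃ i, ∃ z ∈ strip, ∃ γ ∈ Γ, γ • g i z = τ)
    (hinv : ∀ γ ∈ Γ, ∀ τ, T (γ • τ) = T τ) (hcont : Continuous T)
    (hcusp : ∀ i, (∃ t, Tendsto (T ∘ g i) atImInfty (𝓝 t)) ∨
      ∃ u : ℍ → ℍ, Tendsto u atImInfty atImInfty ∧ ∀ z, ∃ γ ∈ Γ, γ • u z = g i z) (Y : ℝ) :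
    ∃ R : ℝ, ∀ τ, R < ‖T τ‖ → ∃ τ', Y < τ'.im ∧ ∃ γ ∈ Γ, γ • τ' = τ := by
  have key : ∀ i, ∃ R : ℝ, ∀ z ∈ strip, R < ‖T (g i z)‖ →
      ∃ τ', Y < τ'.im ∧ ∃ γ ∈ Γ, γ • τ' = g i z := by
    intro i
    have hb : ∀ A : ℝ, ∃ R, ∀ z ∈ strip, z.im ≤ A → ‖T (g i z)‖ ≤ R := fun A => by
      obtain ⟨R, hR⟩ := ((isCompact_strip_le A).image (hcont.comp (hg i))).isBounded.exists_norm_le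
      exact ⟨R, fun z hz hzA => hR _ ⟨z, ⟨hz, hzA⟩, rfl⟩⟩
    rcases hcusp i with ⟨t, h⟩ | ⟨u, hu, hu'⟩
    · obtain ⟨A, hA⟩ := (atImInfty_mem _).mp (h.norm.eventually_le_const (lt_add_one ‖t‖))
      obtain ⟨R, hR⟩ := hb A
      refine ⟨max R (‖t‖ + 1), fun z hz hlt => ?_⟩
      rcases le_total z.im A with h' | h'
      · exact absurd (hR z hz h') (not_le.mpr ((le_max_left _ _).trans_lt hlt))
      · exact absurd (hA z h') (not_le.mpr ((le_max_right _ _).trans_lt hlt))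
    · obtain ⟨A, hA⟩ := (atImInfty_mem _).mp (hu.eventually
        ((atImInfty_mem {z : ℍ | Y < z.im}).mpr ⟨Y + 1, fun z hz => by
          simp only [mem_ofPred_eq]; linarith⟩))
      obtain ⟨R, hR⟩ := hb A
      refine ⟨R, fun z hz hlt => ⟨u z, hA z ?_, hu' z⟩⟩
      by_contra h'
      exact absurd (hR z hz (not_le.mp h').le) (not_le.mpr hlt)
  choose R hR using key
  obtain ⟨M, hM⟩ := (finite_range R).bddAbove
  refine ⟨M, fun τ hτ => ?_⟩
  obtain ⟨i, z, hz, γ, hγ, rfl⟩ := hcover τ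
  rw [hinv γ hγ] at hτ
  obtain ⟨τ', h1, γ', hγ', h2⟩ := hR i z hz ((hM ⟨i, rfl⟩).trans_lt hτ)
  exact ⟨τ', h1, γ * γ', Γ.mul_mem hγ hγ', by rw [mul_smul, h2]⟩

/-- A holomorphic `Γ`-invariant function with a single simple pole at the cusp `i∞` and finite
limits at all the other cusps separates `Γ`-orbits and has cofinite range. -/
theorem injective_and_cofinite_range (hΓ : IsClosed (Γ : Set SL(2, ℝ)))
    (hT : MDifferentiable 𝓘(ℂ) 𝓘(ℂ) T)
    (hinv : ∀ γ ∈ Γ, ∀ τ, T (γ • τ) = T τ)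
    (hg : ∀ i, Continuous (g i))
    (hcover : ∀ τ, ∃ i, ∃ z ∈ strip, ∃ γ ∈ Γ, γ • g i z = τ)
    (hcusp : ∀ i, (∃ t, Tendsto (T ∘ g i) atImInfty (𝓝 t)) ∨
      ∃ u : ℍ → ℍ, Tendsto u atImInfty atImInfty ∧ ∀ z, ∃ γ ∈ Γ, γ • u z = g i z)
    (hinfty : Tendsto T atImInfty (cocompact ℂ))
    (hinj : ∃ Y : ℝ, ∀ τ₁ τ₂ : ℍ, Y < τ₁.im → Y < τ₂.im → T τ₁ = T τ₂ → ∃ γ ∈ Γ, γ • τ₁ = τ₂) :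
    (∀ τ₁ τ₂ : ℍ, T τ₁ = T τ₂ → ∃ γ ∈ Γ, γ • τ₁ = τ₂) ∧ (range T)ᶜ.Finite := by
  have hcont : Continuous T := hT.continuous
  have hneBot : (atImInfty : Filter ℍ).NeBot := inferInstance
  have hne : ¬ ∃ c, ∀ τ, T τ = c := by
    rintro ⟨c, hc⟩
    have := hinfty.eventually (isCompact_singleton (x := c)).compl_mem_cocompact
    obtain ⟨τ, hτ⟩ := this.exists
    exact hτ (hc τ)
  have hopen := isOpenMap_of_not_const hT hne
  let B : Set ℂ := ⋃ i, {t | Tendsto (T ∘ g i) atImInfty (𝓝 t)}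
  have hB : B.Finite := finite_iUnion fun i =>
    Subsingleton.finite fun s hs t ht => tendsto_nhds_unique hs ht
  have hcusp' : ∀ i, (∃ t ∈ B, Tendsto (T ∘ g i) atImInfty (𝓝 t)) ∨
      Tendsto (T ∘ g i) atImInfty (cocompact ℂ) := by
    intro i
    rcases hcusp i with ⟨t, h⟩ | ⟨u, hu, hu'⟩
    · exact .inl ⟨t, mem_iUnion.mpr ⟨i, h⟩, h⟩
    · refine .inr ((hinfty.comp hu).congr fun z => ?_)
      obtain ⟨γ, hγ, h⟩ := hu' z
      simp [← h, hinv γ hγ]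
  have hrank : 1 < Module.rank ℝ ℂ := by simp
  constructor
  · let U : Set ℂ := {c | ∃ τ₁ τ₂, T τ₁ = c ∧ T τ₂ = c ∧ ¬ ∃ γ ∈ Γ, γ • τ₁ = τ₂}
    have hU : IsOpen U := by
      rw [isOpen_iff_mem_nhds]
      rintro c ⟨τ₁, τ₂, h1, h2, h⟩
      obtain ⟨V₁, hV₁, V₂, hV₂, hV⟩ := mem_nhds_prod_iff.mp
        ((isClosed_orbitRel hΓ).isOpen_compl.mem_nhds (x := (τ₁, τ₂)) h)
      filter_upwards [h1 ▸ hopen.image_mem_nhds hV₁, h2 ▸ hopen.image_mem_nhds hV₂]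
      rintro c' ⟨x, hx, rfl⟩ ⟨y, hy, hxy⟩
      exact ⟨x, y, rfl, hxy, hV (mk_mem_prod hx hy)⟩
    let S : Set ℂ := B ∪ T '' {τ : ℍ | deriv (T ∘ ofComplex) τ = 0}
    have hS : S.Countable := hB.countable.union ((countable_critical hT hne).image T)
    have hSd : Dense Sᶜ := hS.dense_compl ℝ
    have hW : Sᶜ ⊆ U ∪ interior Uᶜ := by
      intro c hc
      by_cases hcU : c ∈ U
      · exact .inl hcU
      refine .inr (mem_interior_iff_mem_nhds.mpr ?_)
      obtain ⟨K, hK, hKc⟩ := exists_compact_of_not_cusp_value hg hcover hinv hcusp'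
        (fun h => hc (.inl h))
      have hloc : ∀ᶠ c' in 𝓝 c, ∀ p ∈ K ×ˢ K, T p.1 = c' → T p.2 = c' →
          ∃ γ ∈ Γ, γ • p.1 = p.2 := by
        refine (hK.prod hK).eventually_forall_of_forall_eventually fun p _ => ?_
        obtain ⟨x, y⟩ := p
        by_cases hx : T x = c
        swap
        · have : ∀ᶠ q : ℂ × ℍ × ℍ in 𝓝 (c, (x, y)), T q.2.1 ≠ q.1 :=
            ContinuousAt.eventually_ne (g := fun q : ℂ × ℍ × ℍ => T q.2.1 - q.1)
              (by fun_prop) (sub_ne_zero.mpr hx) |>.mono fun q hq => sub_ne_zero.mp hq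
          filter_upwards [this] with q hq h using absurd h hq
        by_cases hy : T y = c
        swap
        · have : ∀ᶠ q : ℂ × ℍ × ℍ in 𝓝 (c, (x, y)), T q.2.2 ≠ q.1 :=
            ContinuousAt.eventually_ne (g := fun q : ℂ × ℍ × ℍ => T q.2.2 - q.1)
              (by fun_prop) (sub_ne_zero.mpr hy) |>.mono fun q hq => sub_ne_zero.mp hq
          filter_upwards [this] with q hq _ h using absurd h hq
        have hxy : ∃ γ ∈ Γ, γ • x = y := by
          by_contra h
          exact hcU ⟨x, y, hx, hy, h⟩
        obtain ⟨γ, hγ, hγx⟩ := hxy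
        have hd : deriv (T ∘ ofComplex) x ≠ 0 := fun h => hc (.inr ⟨x, h, hx⟩)
        obtain ⟨A, hA, hinjA⟩ := exists_nhds_injOn hT hd
        have h1 : ∀ᶠ q : ℂ × ℍ × ℍ in 𝓝 (c, (x, y)), q.2.1 ∈ A :=
          (by fun_prop : Continuous fun q : ℂ × ℍ × ℍ => q.2.1).continuousAt.eventually_mem hA
        have h2 : ∀ᶠ q : ℂ × ℍ × ℍ in 𝓝 (c, (x, y)), γ⁻¹ • q.2.2 ∈ A := by
          refine (by fun_prop : Continuous fun q : ℂ × ℍ × ℍ =>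
            γ⁻¹ • q.2.2).continuousAt.eventually_mem ?_
          simpa [← hγx] using hA
        filter_upwards [h1, h2] with q hq1 hq2 h h'
        refine ⟨γ, hγ, ?_⟩
        rw [hinjA hq1 hq2 (by rw [hinv _ (Γ.inv_mem hγ), h, h']), smul_inv_smul]
      filter_upwards [hloc, hKc] with c' h1 h2
      rintro ⟨τ₁, τ₂, h3, h4, h5⟩
      obtain ⟨x, hx, γ₁, hγ₁, rfl⟩ := h2 _ h3
      obtain ⟨y, hy, γ₂, hγ₂, rfl⟩ := h2 _ h4
      rw [hinv _ hγ₁] at h3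
      rw [hinv _ hγ₂] at h4
      obtain ⟨γ, hγ, h⟩ := h1 (x, y) ⟨hx, hy⟩ h3 h4
      exact h5 ⟨γ₂ * γ * γ₁⁻¹, Γ.mul_mem (Γ.mul_mem hγ₂ hγ) (Γ.inv_mem hγ₁), by
        rw [mul_smul, mul_smul, inv_smul_smul, h]⟩
    obtain ⟨Y, hY⟩ := hinj
    obtain ⟨R, hR⟩ := exists_norm_bound_of_not_near_infty hg hcover hinv hcont hcusp Y
    have hout : {c : ℂ | R < ‖c‖} ⊆ Uᶜ := by
      rintro c hc ⟨τ₁, τ₂, h3, h4, h5⟩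
      obtain ⟨x, hx, γ₁, hγ₁, rfl⟩ := hR τ₁ (h3 ▸ hc)
      obtain ⟨y, hy, γ₂, hγ₂, rfl⟩ := hR τ₂ (h4 ▸ hc)
      rw [hinv _ hγ₁] at h3
      rw [hinv _ hγ₂] at h4
      obtain ⟨γ, hγ, h⟩ := hY x y hx hy (h3.trans h4.symm)
      exact h5 ⟨γ₂ * γ * γ₁⁻¹, Γ.mul_mem (Γ.mul_mem hγ₂ hγ) (Γ.inv_mem hγ₁), by
        rw [mul_smul, mul_smul, inv_smul_smul, h]⟩
    have hopenR : IsOpen {c : ℂ | R < ‖c‖} := isOpen_lt continuous_const continuous_norm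
    have hDW : (Sᶜ ∩ interior Uᶜ).Nonempty := by
      obtain ⟨r, hr⟩ := NormedSpace.exists_lt_norm ℝ ℂ R
      obtain ⟨c, hc1, hc2⟩ := hSd.inter_open_nonempty _ hopenR ⟨r, hr⟩
      exact ⟨c, hc2, (interior_maximal hout hopenR) hc1⟩
    have hUe : U = ∅ := by
      by_contra hne'
      obtain ⟨c, hc1, hc2⟩ := hSd.inter_open_nonempty U hU (nonempty_iff_ne_empty.mpr hne')
      obtain ⟨c, -, hc1, hc2⟩ := (hS.isConnected_compl_of_one_lt_rank hrank).isPreconnected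
        U _ hU isOpen_interior hW ⟨c, hc2, hc1⟩ hDW
      exact interior_subset hc2 hc1
    intro τ₁ τ₂ h
    by_contra h'
    have : T τ₂ ∈ U := ⟨τ₁, τ₂, h, rfl, h'⟩
    rw [hUe] at this
    exact this
  · refine hB.subset (compl_subset_comm.mp ?_)
    have hcov : Bᶜ ⊆ range T ∪ interior (range T)ᶜ := by
      intro c hc
      by_cases hcT : c ∈ range T
      · exact .inl hcT
      refine .inr (mem_interior_iff_mem_nhds.mpr ?_)
      obtain ⟨K, hK, hKc⟩ := exists_compact_of_not_cusp_value hg hcover hinv hcusp' hc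
      have hcl : (T '' K)ᶜ ∈ 𝓝 c := (hK.image hcont).isClosed.isOpen_compl.mem_nhds
        fun h => hcT (image_subset_range _ _ h)
      filter_upwards [hKc, hcl] with c' h1 h2
      rintro ⟨τ, hτ⟩
      obtain ⟨x, hx, γ, hγ, rfl⟩ := h1 τ hτ
      exact h2 ⟨x, hx, by rw [← hinv γ hγ, hτ]⟩
    have hBd : Dense Bᶜ := hB.countable.dense_compl ℝ
    intro c hc
    rcases hcov hc with h | h
    · exact h
    obtain ⟨c', h1, h2⟩ := hBd.inter_open_nonempty (range T) hopen.isOpen_range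
      (range_nonempty T)
    obtain ⟨c, -, hc1, hc2⟩ := (hB.countable.isConnected_compl_of_one_lt_rank hrank).isPreconnected
      _ _ hopen.isOpen_range isOpen_interior hcov ⟨c', h2, h1⟩ ⟨c, hc, h⟩
    exact (interior_subset hc2 hc1).elim

end Criterion

/-! ### The exponential `e2` -/

section Exponential

lemma e2_eq_qParam (z : ℂ) : e2 z = Function.Periodic.qParam 1 z := by
  simp [e2, Function.Periodic.qParam]

lemma e2_ne_zero (z : ℂ) : e2 z ≠ 0 := Complex.exp_ne_zero _

lemma e2_add (z w : ℂ) : e2 (z + w) = e2 z * e2 w := by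
  simp [e2, mul_add, Complex.exp_add]

@[simp] lemma e2_zero : e2 0 = 1 := by simp [e2]

lemma e2_neg (z : ℂ) : e2 (-z) = (e2 z)⁻¹ := by simp [e2, Complex.exp_neg]

lemma e2_natCast_mul (n : ℕ) (z : ℂ) : e2 (n * z) = e2 z ^ n := by
  rw [e2, e2, ← Complex.exp_nat_mul]; congr 1; ring

lemma e2_intCast_mul (n : ℤ) (z : ℂ) : e2 (n * z) = e2 z ^ n := by
  rw [e2, e2, ← Complex.exp_int_mul]; congr 1; ring

lemma e2_intCast (n : ℤ) : e2 n = 1 := by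
  rw [e2, mul_comm]; exact Complex.exp_int_mul_two_pi_mul_I n

lemma e2_add_intCast (z : ℂ) (n : ℤ) : e2 (z + n) = e2 z := by
  rw [e2_add, e2_intCast, mul_one]

lemma e2_eq_e2_iff {z w : ℂ} : e2 z = e2 w ↔ ∃ n : ℤ, z = w + n := by
  rw [e2, e2, Complex.exp_eq_exp_iff_exists_int]
  refine exists_congr fun n => ?_
  rw [show 2 * (Real.pi : ℂ) * Complex.I * w + n * (2 * Real.pi * Complex.I)
    = 2 * (Real.pi : ℂ) * Complex.I * (w + n) by ring]
  exact mul_right_inj' Complex.two_pi_I_ne_zero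

lemma norm_e2 (z : ℂ) : ‖e2 z‖ = Real.exp (-2 * Real.pi * z.im) := by
  simpa [e2_eq_qParam] using Function.Periodic.norm_qParam 1 z

lemma differentiable_e2 : Differentiable ℂ e2 := by
  unfold e2; fun_prop

lemma tendsto_e2_atImInfty : Tendsto (fun τ : ℍ => e2 τ) atImInfty (𝓝[≠] 0) := by
  have : Tendsto (fun τ : ℍ => e2 τ) atImInfty (𝓝 0) := by
    simpa [← e2_eq_qParam] using qParam_tendsto_atImInfty one_pos
  exact tendsto_nhdsWithin_iff.mpr ⟨this, .of_forall fun τ => e2_ne_zero _⟩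

lemma eventually_exists_e2_eq (Y : ℝ) :
    ∀ᶠ q in 𝓝[≠] (0 : ℂ), ∃ τ : ℍ, Y < τ.im ∧ e2 τ = q := by
  have := (Function.Periodic.invQParam_tendsto (h := 1) one_pos).eventually
    (tendsto_comap.eventually (eventually_gt_atTop (max Y 0)))
  filter_upwards [this, self_mem_nhdsWithin] with q hq hq0
  refine ⟨⟨_, (le_max_right _ _).trans_lt hq⟩, (le_max_left _ _).trans_lt hq, ?_⟩
  rw [e2_eq_qParam]
  exact Function.Periodic.qParam_right_inv one_ne_zero hq0

end Exponential

/-! ### Functions with a simple pole at infinity -/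

/-- `T = q⁻¹ Φ(q)` with `Φ` analytic at `0` and `Φ(0) = 1`. -/
def HasPoleSeries (T : ℍ → ℂ) (Φ : ℂ → ℂ) : Prop :=
  AnalyticAt ℂ Φ 0 ∧ Φ 0 = 1 ∧ ∀ τ : ℍ, T τ = (e2 τ)⁻¹ * Φ (e2 τ)

namespace HasPoleSeries

variable {T : ℍ → ℂ} {Φ : ℂ → ℂ}

lemma eventually_ne (h : HasPoleSeries T Φ) : ∀ᶠ q in 𝓝 0, Φ q ≠ 0 :=
  h.1.continuousAt.eventually_ne (by simp [h.2.1])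

lemma hasStrictDerivAt (h : HasPoleSeries T Φ) :
    HasStrictDerivAt (fun q => q / Φ q) 1 0 := by
  have := (hasStrictDerivAt_id (0 : ℂ)).div h.1.hasStrictDerivAt (by simp [h.2.1])
  simpa [h.2.1] using! this

lemma tendsto (h : HasPoleSeries T Φ) : Tendsto T atImInfty (cocompact ℂ) := by
  have h1 : Tendsto (fun q => q⁻¹ * Φ q) (𝓝[≠] 0) (Bornology.cobounded ℂ) := by
    have h2 : Tendsto Φ (𝓝[≠] 0) (𝓝 1) := by
      simpa [h.2.1] using h.1.continuousAt.tendsto.mono_left nhdsWithin_le_nhds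
    rw [← tendsto_norm_atTop_iff_cobounded]
    simp only [norm_mul]
    have h3 := tendsto_norm_atTop_iff_cobounded.mpr
      (tendsto_inv₀_nhdsNE_zero (α := ℂ))
    exact h3.atTop_mul_pos (by norm_num) h2.norm
  rw [← Metric.cobounded_eq_cocompact]
  exact (h1.comp tendsto_e2_atImInfty).congr fun τ => (h.2.2 τ).symm

lemma exists_injective (h : HasPoleSeries T Φ) :
    ∃ Y : ℝ, ∀ τ₁ τ₂ : ℍ, Y < τ₁.im → Y < τ₂.im → T τ₁ = T τ₂ →
      ∃ n : ℤ, (τ₁ : ℂ) = τ₂ + n := by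
  have h1 := h.hasStrictDerivAt.eventually_left_inverse one_ne_zero
  have h2 := (tendsto_e2_atImInfty.mono_right nhdsWithin_le_nhds).eventually
    (h1.and h.eventually_ne)
  obtain ⟨Y, hY⟩ := (atImInfty_mem _).mp h2
  refine ⟨Y, fun τ₁ τ₂ hτ₁ hτ₂ heq => ?_⟩
  rw [← e2_eq_e2_iff]
  obtain ⟨h₁, hn₁⟩ := hY τ₁ hτ₁.le
  obtain ⟨h₂, hn₂⟩ := hY τ₂ hτ₂.le
  rw [← h₁, ← h₂]
  congr 1
  rw [h.2.2, h.2.2] at heq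
  have := congr_arg (·⁻¹) heq
  simpa [mul_inv, div_eq_inv_mul] using this

lemma exists_surjective (h : HasPoleSeries T Φ) (Y : ℝ) :
    ∀ᶠ w in cocompact ℂ, ∃ τ : ℍ, Y < τ.im ∧ T τ = w := by
  have h1 : map (fun q => q / Φ q) (𝓝 0) = 𝓝 0 := by
    simpa using h.hasStrictDerivAt.map_nhds_eq one_ne_zero
  have h2 := eventually_exists_e2_eq Y
  rw [eventually_nhdsWithin_iff] at h2
  have h3 : ∀ᶠ w in 𝓝 (0 : ℂ), ∃ q, (q ≠ 0 → ∃ τ : ℍ, Y < τ.im ∧ e2 τ = q) ∧ q / Φ q = w := by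
    rw [← h1, eventually_map]
    filter_upwards [h2] with q hq using ⟨q, hq, rfl⟩
  rw [← Metric.cobounded_eq_cocompact]
  filter_upwards [(tendsto_inv₀_cobounded (α := ℂ)).eventually h3,
    Bornology.eventually_ne_cobounded 0] with w hw hw0
  obtain ⟨q, hq, hqw⟩ := hw
  have hq0 : q ≠ 0 := by rintro rfl; exact inv_ne_zero hw0 (by simpa using hqw.symm)
  obtain ⟨τ, hτ, rfl⟩ := hq hq0
  refine ⟨τ, hτ, ?_⟩
  rw [h.2.2, ← inv_inv w, ← hqw, inv_div, div_eq_inv_mul]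

lemma hasOqExpansion (h : HasPoleSeries T Φ) {d : ℕ} (hd : deriv Φ 0 = -d) :
    HasOqExpansion d T := by
  obtain ⟨p, hp⟩ := h.1
  have hb := hp.isBigO_sub_partialSum_pow 2
  have hsum : ∀ y, p.partialSum 2 y = 1 - d * y := by
    intro y
    have h0 : p.coeff 0 = 1 := by rw [← h.2.1, ← hp.coeff_zero 1]; rfl
    have h1 : p.coeff 1 = -d := by rw [← hd, hp.deriv]; rfl
    simp [FormalMultilinearSeries.partialSum, Finset.sum_range_succ, h0, h1]
    ring
  simp only [zero_add, hsum] at hb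
  have hb' := hb.comp_tendsto (tendsto_e2_atImInfty.mono_right nhdsWithin_le_nhds)
  rw [HasOqExpansion, IsBoundedAtImInfty, BoundedAtFilter]
  have hb2 := hb'.mul (Asymptotics.isBigO_refl (fun τ : ℍ => (e2 τ)⁻¹ ^ 2) atImInfty).norm_right
  refine (hb2.congr_left fun τ => ?_).trans (Asymptotics.IsBigO.of_bound 1 (.of_forall fun τ => ?_))
  · have := e2_ne_zero τ
    simp only [Function.comp_apply, h.2.2, e2_neg]
    field_simp
    ring
  · have := e2_ne_zero τ
    simp [this]

end HasPoleSeries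

/-! ### Eta products -/

/-- The Euler product `∏ (1 - q ^ n)`. -/
def eulerProduct (q : ℂ) : ℂ := ∏' n : ℕ, (1 - q ^ (n + 1))

lemma dedekindEta_eq (τ : ℂ) : dedekindEta τ = e2 (τ / 24) * eulerProduct (e2 τ) := by
  rw [dedekindEta, eulerProduct]
  congr 1
  refine tprod_congr fun n => ?_
  rw [← e2_natCast_mul]; push_cast; rfl

lemma dedekindEta_eq_eta (τ : ℂ) : dedekindEta τ = ModularForm.eta τ := by
  rw [dedekindEta_eq, ModularForm.eta, eulerProduct, e2, Function.Periodic.qParam]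
  congr 1
  · congr 1; push_cast; ring
  · simp only [ModularForm.eta_q, e2_eq_qParam]

lemma dedekindEta_ne_zero {τ : ℂ} (hτ : 0 < τ.im) : dedekindEta τ ≠ 0 := by
  rw [dedekindEta_eq_eta]; exact ModularForm.eta_ne_zero hτ

lemma differentiableOn_dedekindEta : DifferentiableOn ℂ dedekindEta upperHalfPlaneSet :=
  fun z hz => by
    rw [show dedekindEta = ModularForm.eta from funext dedekindEta_eq_eta]
    exact (ModularForm.differentiableAt_eta_of_mem_upperHalfPlaneSet hz).differentiableWithinAt

lemma eulerProduct_zero : eulerProduct 0 = 1 := by simp [eulerProduct]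

lemma analyticAt_eulerProduct : AnalyticAt ℂ eulerProduct 0 :=
  ModularForm.differentiableOn_tprod_one_sub_pow.analyticAt
    (Metric.isOpen_ball.mem_nhds (by simp))

lemma deriv_eulerProduct : deriv eulerProduct 0 = -1 := by
  have hterm : ∀ n : ℕ, logDeriv (fun q : ℂ => 1 - q ^ (n + 1)) 0 = if n = 0 then -1 else 0 := by
    intro n
    rcases n with _ | n <;> simp [logDeriv_apply]
  have h := logDeriv_tprod_eq_tsum (x := 0) Metric.isOpen_ball (by simp)
    (f := fun (n : ℕ) (q : ℂ) => 1 - q ^ (n + 1)) (by simp) (by fun_prop)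
    (by simp only [hterm]; exact (hasSum_ite_eq 0 (-1 : ℂ)).summable)
    ModularForm.multipliableLocallyUniformlyOn_one_sub_pow (by simp)
  simp only [hterm, tsum_ite_eq] at h
  have hlog : logDeriv eulerProduct 0 = -1 := h
  rwa [logDeriv_apply, eulerProduct_zero, div_one] at hlog

/-- The power series `∏ φ(q ^ n) ^ (-k)` attached to a frame shape. -/
def frameSeries (P : List (ℕ × ℤ)) (q : ℂ) : ℂ :=
  (P.map fun p => eulerProduct (q ^ p.1) ^ (-p.2)).prod

lemma etaFrame_inv {P : List (ℕ × ℤ)} (τ : ℂ) :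
    (etaFrame P τ)⁻¹ =
      (e2 (τ / 24) ^ (P.map fun p => (p.1 : ℤ) * p.2).sum)⁻¹ * frameSeries P (e2 τ) := by
  induction P with
  | nil => simp [etaFrame, frameSeries]
  | cons p P ih =>
    simp only [etaFrame, frameSeries, List.map_cons, List.prod_cons, List.sum_cons,
      mul_inv] at ih ⊢
    rw [ih, dedekindEta_eq, zpow_add₀ (e2_ne_zero _), mul_div_assoc, e2_natCast_mul,
      e2_natCast_mul, zpow_mul, zpow_natCast, mul_zpow, zpow_neg, mul_inv, mul_inv]
    ring

lemma frameSeries_zero_and_analyticAt_and_deriv {P : List (ℕ × ℤ)} (hP : ∀ p ∈ P, 0 < p.1) :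
    frameSeries P 0 = 1 ∧ AnalyticAt ℂ (frameSeries P) 0 ∧
      deriv (frameSeries P) 0 = ((P.map fun p => if p.1 = 1 then p.2 else 0).sum : ℤ) := by
  induction P with
  | nil =>
    have : frameSeries [] = fun _ => 1 := by ext; simp [frameSeries]
    simp [this, analyticAt_const]
  | cons p P ih =>
    obtain ⟨h0, ha, hd⟩ := ih fun x hx => hP x (List.mem_cons_of_mem _ hx)
    have hp : p.1 ≠ 0 := (hP p List.mem_cons_self).ne'
    have hcons : frameSeries (p :: P) =
        fun q => eulerProduct (q ^ p.1) ^ (-p.2) * frameSeries P q := by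
      ext q; simp [frameSeries]
    have hpa : AnalyticAt ℂ (fun q : ℂ => eulerProduct (q ^ p.1)) 0 :=
      AnalyticAt.fun_comp (by simpa [hp] using analyticAt_eulerProduct) (by fun_prop)
    have hpz : AnalyticAt ℂ (fun q : ℂ => eulerProduct (q ^ p.1) ^ (-p.2)) 0 :=
      hpa.zpow (by simp [hp, eulerProduct_zero])
    have hpd : HasDerivAt (fun q : ℂ => eulerProduct (q ^ p.1)) (if p.1 = 1 then -1 else 0) 0 := by
      have h1 := HasDerivAt.comp (0 : ℂ) (h₂ := eulerProduct) (h₂' := -1)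
        (by simpa [hp, ← deriv_eulerProduct]
              using analyticAt_eulerProduct.differentiableAt.hasDerivAt)
        (hasDerivAt_pow p.1 (0 : ℂ))
      convert! h1 using 1
      split_ifs with h
      · simp [h]
      · have : p.1 - 1 ≠ 0 := by omega
        simp [this]
    have hpdz := (hasDerivAt_zpow (-p.2) (eulerProduct ((0 : ℂ) ^ p.1))
      (.inl (by simp [hp, eulerProduct_zero]))).comp (0 : ℂ) hpd
    refine ⟨by simp [hcons, h0, hp, eulerProduct_zero], by rw [hcons]; exact hpz.mul ha, ?_⟩
    rw [hcons]
    have := (hpdz.mul ha.differentiableAt.hasDerivAt).deriv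
    refine (Eq.trans ?_ this).trans ?_
    · rfl
    · simp only [Function.comp_apply, h0, hd, hp, ne_eq, not_false_eq_true, zero_pow,
        eulerProduct_zero, one_zpow, List.map_cons, List.sum_cons]
      push_cast
      split_ifs <;> simp

lemma hasPoleSeries_etaFrame_inv {P : List (ℕ × ℤ)} (hP : ∀ p ∈ P, 0 < p.1)
    (hsum : (P.map fun p => (p.1 : ℤ) * p.2).sum = 24) :
    HasPoleSeries (fun τ => (etaFrame P τ)⁻¹) (frameSeries P) := by
  obtain ⟨h0, ha, -⟩ := frameSeries_zero_and_analyticAt_and_deriv hP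
  refine ⟨ha, h0, fun τ => ?_⟩
  beta_reduce
  rw [etaFrame_inv, hsum, ← e2_intCast_mul]
  congr 3
  push_cast; ring

lemma etaFrame_ne_zero {P : List (ℕ × ℤ)} (hP : ∀ p ∈ P, 0 < p.1) {τ : ℂ} (hτ : 0 < τ.im) :
    etaFrame P τ ≠ 0 := by
  rw [etaFrame]
  refine List.prod_ne_zero fun h => ?_
  obtain ⟨p, hp, h⟩ := List.mem_map.mp h
  refine zpow_ne_zero _ (dedekindEta_ne_zero ?_) h
  have : (0 : ℝ) < p.1 := by exact_mod_cast hP p hp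
  simpa using mul_pos this hτ

lemma differentiableOn_etaFrame {P : List (ℕ × ℤ)} (hP : ∀ p ∈ P, 0 < p.1) :
    DifferentiableOn ℂ (etaFrame P) upperHalfPlaneSet := by
  induction P with
  | nil =>
    have : etaFrame [] = fun _ => 1 := by ext; simp [etaFrame]
    rw [this]; fun_prop
  | cons p P ih =>
    have hcons : etaFrame (p :: P) =
        fun τ => dedekindEta (p.1 * τ) ^ p.2 * etaFrame P τ := by
      ext; simp [etaFrame]
    have hp : (0 : ℝ) < p.1 := by exact_mod_cast hP p List.mem_cons_self
    have hmaps : MapsTo (fun τ : ℂ => (p.1 : ℂ) * τ) upperHalfPlaneSet upperHalfPlaneSet :=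
      fun τ hτ => by simpa using! mul_pos hp hτ
    rw [hcons]
    refine .mul (.zpow ?_ (.inl fun τ hτ => dedekindEta_ne_zero (hmaps hτ)))
      (ih fun x hx => hP x (List.mem_cons_of_mem _ hx))
    exact differentiableOn_dedekindEta.comp (by fun_prop) hmaps

lemma mdifferentiable_etaFrame_inv {P : List (ℕ × ℤ)} (hP : ∀ p ∈ P, 0 < p.1) :
    MDifferentiable 𝓘(ℂ) 𝓘(ℂ) (fun τ : ℍ => (etaFrame P τ)⁻¹) := by
  rw [UpperHalfPlane.mdifferentiable_iff]
  refine ((differentiableOn_etaFrame hP).inv fun τ hτ => etaFrame_ne_zero hP hτ).congr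
    fun τ hτ => ?_
  simp [ofComplex_apply_of_im_pos hτ]

/-! ### The transformation law of the eta function -/

section Jacobi

open scoped NumberTheorySymbols

lemma jacobiSym_add_four_mul (m : ℤ) {n : ℕ} (hn : Odd n) :
    J(m | n + 4 * m.natAbs) = J(m | n) := by
  have h : Odd (n + 4 * m.natAbs) := by
    rw [Nat.odd_iff] at hn ⊢; omega
  rw [jacobiSym.mod_right m h, jacobiSym.mod_right m hn, Nat.add_mod_right]

lemma jacobiSym_natCast_add_two_mul {m n : ℕ} (hm : Odd m) (hn : Odd n) :
    J(m | n + 2 * m) = if m % 4 = 3 then -J(m | n) else J(m | n) := by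
  have h : Odd (n + 2 * m) := by rw [Nat.odd_iff] at hn ⊢; omega
  have h1 : J(((n + 2 * m : ℕ) : ℤ) | m) = J((n : ℤ) | m) :=
    jacobiSym.mod_left' (by push_cast; simp)
  have h2 := jacobiSym.quadratic_reciprocity_if (Nat.odd_iff.mp hm) (Nat.odd_iff.mp h)
  have h3 := jacobiSym.quadratic_reciprocity_if (Nat.odd_iff.mp hm) (Nat.odd_iff.mp hn)
  rw [← h2, ← h3, h1]
  rw [Nat.odd_iff] at hm hn
  have h4 : (n + 2 * m) % 4 = 3 ↔ ¬ n % 4 = 3 := by omega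
  simp only [h4]
  clear h1 h2 h3 h4
  split_ifs <;> simp_all

/-- Shifting the lower argument of the Jacobi symbol by twice the upper one. -/
lemma jacobiSym_add_two_mul (c : ℤ) {n : ℕ} (hn : Odd n) :
    J(c | n + 2 * c.natAbs) = if c % 4 = 2 ∨ c % 4 = 3 then -J(c | n) else J(c | n) := by
  rcases Int.even_or_odd c with hc | hc
  · obtain ⟨m, rfl⟩ := hc.two_dvd
    have h : Odd (n + 4 * m.natAbs) := by
      rw [Nat.odd_iff] at hn ⊢; omega
    have h8 : ∀ x : ZMod 8, ZMod.χ₈ (x + 4) = -ZMod.χ₈ x := by decide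
    rw [show n + 2 * (2 * m).natAbs = n + 4 * m.natAbs by omega, jacobiSym.mul_left,
      jacobiSym.mul_left, jacobiSym_add_four_mul m hn, jacobiSym.at_two h, jacobiSym.at_two hn]
    rcases Nat.even_or_odd' m.natAbs with ⟨k, hk | hk⟩
    · have : ((n + 4 * m.natAbs : ℕ) : ZMod 8) = n := by
        rw [hk, ← mul_assoc]; push_cast
        rw [show (8 : ZMod 8) = 0 by decide, zero_mul, add_zero]
      rw [this, if_neg (by omega)]
    · have : ((n + 4 * m.natAbs : ℕ) : ZMod 8) = n + 4 := by
        rw [hk, mul_add, ← mul_assoc]; push_cast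
        rw [show (8 : ZMod 8) = 0 by decide, zero_mul, zero_add]
      rw [this, h8, if_pos (by omega)]
      ring
  · have hm : Odd c.natAbs := Int.natAbs_odd.mpr hc
    have h := jacobiSym_natCast_add_two_mul hm hn
    rw [Int.odd_iff] at hc
    rcases Int.natAbs_eq c with h1 | h1
    · nth_rewrite 1 [h1]
      rw [h, ← h1]
      exact if_congr (by omega) rfl rfl
    · have hodd : Odd (n + 2 * c.natAbs) := by rw [Nat.odd_iff] at hn ⊢; omega
      have h4 : ∀ x : ZMod 4, ZMod.χ₄ (x + 2) = -ZMod.χ₄ x := by decide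
      have h5 : ((n + 2 * c.natAbs : ℕ) : ZMod 4) = n + 2 := by
        obtain ⟨k, hk⟩ := hm
        rw [hk, mul_add, ← mul_assoc]; push_cast
        rw [show (4 : ZMod 4) = 0 by decide, zero_mul, zero_add]
      have h6 : J(c | n) = ZMod.χ₄ n * J(c.natAbs | n) := by
        nth_rewrite 1 [h1]; rw [jacobiSym.neg _ hn]
      have h7 : J(c | n + 2 * c.natAbs) = -ZMod.χ₄ n * J(c.natAbs | n + 2 * c.natAbs) := by
        nth_rewrite 1 [h1]; rw [jacobiSym.neg _ hodd, h5, h4]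
      rw [h7, h, h6]
      split_ifs <;> first | omega | ring

end Jacobi

section SquareRoot

lemma sqrt_mul_of_arg {z w : ℂ} (hz : z ≠ 0) (hw : w ≠ 0)
    (h : z.arg + w.arg ∈ Ioc (-Real.pi) Real.pi) :
    Complex.sqrt (z * w) = Complex.sqrt z * Complex.sqrt w := by
  have hzw := mul_ne_zero hz hw
  simp only [Complex.sqrt, Complex.cpow_def_of_ne_zero hz, Complex.cpow_def_of_ne_zero hw,
    Complex.cpow_def_of_ne_zero hzw, Complex.log_mul hz hw h, add_mul, Complex.exp_add]

lemma sqrt_mul_of_im {z w : ℂ} (hz : z ∈ Complex.slitPlane) (hw : w ∈ Complex.slitPlane)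
    (hpos : 0 ≤ z.im → 0 ≤ w.im → 0 ≤ (z * w).im)
    (hneg : z.im < 0 → w.im < 0 → (z * w).im < 0) :
    Complex.sqrt (z * w) = Complex.sqrt z * Complex.sqrt w := by
  have hz0 := Complex.slitPlane_ne_zero hz
  have hw0 := Complex.slitPlane_ne_zero hw
  have h1 := Complex.neg_pi_lt_arg z
  have h2 := Complex.neg_pi_lt_arg w
  have h3 := Complex.arg_le_pi z
  have h4 := Complex.arg_le_pi w
  have him : (z * w).im = ‖z‖ * ‖w‖ * Real.sin (z.arg + w.arg) := by
    rw [Complex.mul_im, Real.sin_add]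
    linear_combination -w.im * Complex.norm_mul_cos_arg z - w.re * Complex.norm_mul_sin_arg z
      - ‖z‖ * Real.cos z.arg * Complex.norm_mul_sin_arg w
      - ‖z‖ * Real.sin z.arg * Complex.norm_mul_cos_arg w
  have hnorm : 0 < ‖z‖ * ‖w‖ := by positivity
  apply sqrt_mul_of_arg hz0 hw0
  rcases le_or_gt 0 z.im with hzi | hzi <;> rcases le_or_gt 0 w.im with hwi | hwi
  · have := Complex.arg_nonneg_iff.mpr hzi
    have := Complex.arg_nonneg_iff.mpr hwi
    have hp := hpos hzi hwi
    rw [him] at hp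
    refine ⟨by linarith [Real.pi_pos], ?_⟩
    by_contra! hlt
    have h5 : Real.sin (z.arg + w.arg - 2 * Real.pi) < 0 := by
      apply Real.sin_neg_of_neg_of_neg_pi_lt
      · rcases h3.lt_or_eq with h | h
        · linarith
        · exact absurd h (Complex.mem_slitPlane_iff_arg.mp hz).1
      · linarith
    rw [Real.sin_sub_two_pi] at h5
    nlinarith
  · have := Complex.arg_nonneg_iff.mpr hzi
    have := Complex.arg_neg_iff.mpr hwi
    constructor <;> linarith
  · have := Complex.arg_neg_iff.mpr hzi
    have := Complex.arg_nonneg_iff.mpr hwi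
    constructor <;> linarith
  · have := Complex.arg_neg_iff.mpr hzi
    have := Complex.arg_neg_iff.mpr hwi
    have hp := hneg hzi hwi
    rw [him] at hp
    refine ⟨?_, by linarith [Real.pi_pos]⟩
    by_contra! hlt
    have h5 : 0 ≤ Real.sin (z.arg + w.arg + 2 * Real.pi) := by
      apply Real.sin_nonneg_of_nonneg_of_le_pi <;> linarith
    rw [Real.sin_add_two_pi] at h5
    nlinarith

lemma sqrt_mul_of_re {z w : ℂ} (hz : 0 < z.re) (hw : 0 < w.re) :
    Complex.sqrt (z * w) = Complex.sqrt z * Complex.sqrt w := by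
  have h1 := abs_lt.mp (Complex.abs_arg_lt_pi_div_two_iff.mpr (.inl hz))
  have h2 := abs_lt.mp (Complex.abs_arg_lt_pi_div_two_iff.mpr (.inl hw))
  refine sqrt_mul_of_arg (by rintro rfl; simp at hz) (by rintro rfl; simp at hw)
    ⟨by linarith, by linarith⟩

lemma sqrt_mul_self {z : ℂ} : Complex.sqrt z * Complex.sqrt z = z := by
  by_cases hz : z = 0
  · simp [hz, Complex.sqrt]
  · rw [Complex.sqrt, ← Complex.cpow_add _ _ hz]; norm_num

lemma sqrt_ne_zero {z : ℂ} (hz : z ≠ 0) : Complex.sqrt z ≠ 0 := fun h =>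
  hz (by rw [← sqrt_mul_self (z := z), h, zero_mul])

end SquareRoot

section Eta

lemma dedekindEta_add_intCast (τ : ℂ) (m : ℤ) :
    dedekindEta (τ + m) = e2 (m / 24) * dedekindEta τ := by
  rw [dedekindEta_eq, dedekindEta_eq, add_div, e2_add, e2_add_intCast]; ring

lemma dedekindEta_neg_inv {τ : ℂ} (hτ : 0 < τ.im) :
    dedekindEta (-1 / τ) = Complex.sqrt (τ / Complex.I) * dedekindEta τ := by
  have h := ModularForm.eta_comp_eq_csqrt_I_inv (x := τ) hτ
  have hre : 0 < (τ / Complex.I).re := by simpa using hτ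
  have h2 := abs_lt.mp (Complex.abs_arg_lt_pi_div_two_iff.mpr (.inl hre))
  have h1 : Complex.sqrt τ = Complex.sqrt Complex.I * Complex.sqrt (τ / Complex.I) := by
    rw [← sqrt_mul_of_arg Complex.I_ne_zero (by rintro h; simp [h] at hre)
      ⟨by rw [Complex.arg_I]; linarith [Real.pi_pos], by rw [Complex.arg_I]; linarith⟩,
      mul_div_cancel₀ _ Complex.I_ne_zero]
  have h3 := sqrt_ne_zero Complex.I_ne_zero
  simp only [Function.comp_apply, Pi.smul_apply, Pi.mul_apply, smul_eq_mul, h1] at h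
  rw [dedekindEta_eq_eta, dedekindEta_eq_eta, h]
  field_simp

lemma dedekindEta_lower {τ : ℂ} (hτ : 0 < τ.im) (m : ℤ) :
    dedekindEta (τ / (m * τ + 1)) =
      e2 (-m / 24) * Complex.sqrt (m * τ + 1) * dedekindEta τ := by
  have hτ0 : τ ≠ 0 := by rintro rfl; simp at hτ
  have him : 0 < (-1 / τ).im := by
    rw [neg_div, Complex.neg_im, one_div, Complex.inv_im]
    have := Complex.normSq_pos.mpr hτ0
    rw [neg_div, neg_neg]; positivity
  have him' : 0 < (-1 / τ + (-m : ℤ)).im := by simpa using him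
  have hne : -1 / τ + ((-m : ℤ) : ℂ) ≠ 0 := by
    intro h; rw [h] at him'; simp at him'
  have hne' : (m : ℂ) * τ + 1 ≠ 0 := by
    intro h
    apply hne
    push_cast
    field_simp
    linear_combination -h
  have h1 : τ / (m * τ + 1) = -1 / (-1 / τ + (-m : ℤ)) := by
    rw [div_eq_div_iff hne' hne]
    push_cast
    field_simp
    ring
  have h2 : (m : ℂ) * τ + 1 = ((-1 / τ + (-m : ℤ)) / Complex.I) * (τ / Complex.I) := by
    rw [div_mul_div_comm, Complex.I_mul_I]
    push_cast
    field_simp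
    ring
  rw [h1, dedekindEta_neg_inv him', dedekindEta_add_intCast, dedekindEta_neg_inv hτ, h2,
    sqrt_mul_of_re (by simpa using him') (by simpa using hτ)]
  push_cast
  ring

end Eta

section EtaMultiplier

open scoped NumberTheorySymbols

lemma e2_div_congr {m n : ℤ} (h : (24 : ℤ) ∣ m - n) : e2 (m / 24) = e2 (n / 24) := by
  obtain ⟨k, hk⟩ := h
  rw [e2_eq_e2_iff]
  refine ⟨k, ?_⟩
  have : (m : ℂ) - n = 24 * k := by exact_mod_cast hk
  linear_combination this / 24

lemma e2_div_neg {m n : ℤ} (h : (24 : ℤ) ∣ m - n - 12) : e2 (m / 24) = -e2 (n / 24) := by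
  have h1 : e2 (m / 24) = e2 ((n + 12 : ℤ) / 24) := e2_div_congr (by rwa [← sub_sub])
  have h2 : e2 (12 / 24) = -1 := by
    rw [e2, ← Complex.exp_pi_mul_I]; congr 1; ring
  rw [h1]
  push_cast
  rw [add_div, e2_add, h2]; ring

/-- The exponent in Petersson's formula for the eta multiplier. -/
def etaExponent (a b c d : ℤ) : ℤ :=
  (a + d) * c - b * d * (c ^ 2 - 1) + 3 * d - 3 - 3 * c * d

/-- The eta multiplier, for `d` odd and positive. -/
def etaMultiplier (a b c d : ℤ) : ℂ :=
  (J(c | d.toNat) : ℤ) * e2 ((etaExponent a b c d : ℤ) / 24)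

/-- The transformation law of the eta function under `(a b; c d)`. -/
def EtaLaw (a b c d : ℤ) : Prop :=
  ∀ τ : ℂ, 0 < τ.im → dedekindEta ((a * τ + b) / (c * τ + d)) =
    etaMultiplier a b c d * Complex.sqrt (c * τ + d) * dedekindEta τ

lemma six_dvd_cube_sub (c : ℤ) : (6 : ℤ) ∣ c ^ 3 - c := by
  have h2 : (2 : ℤ) ∣ c ^ 3 - c := by
    rw [← even_iff_two_dvd]; simp [parity_simps]
  have h3 : (3 : ℤ) ∣ c ^ 3 - c := by
    refine (ZMod.intCast_zmod_eq_zero_iff_dvd _ 3).mp ?_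
    push_cast
    generalize (c : ZMod 3) = x
    revert x; decide
  exact IsCoprime.mul_dvd (by norm_num) h2 h3

lemma etaExponent_shift {a b c d s : ℤ} (hdet : a * d - b * c = 1) (hs : s = 1 ∨ s = -1) :
    (24 : ℤ) ∣ etaExponent a b c d - (etaExponent a (b - 2 * s * a) c (d - 2 * s * c) + 2 * s)
      - 6 * s * c * (1 - c) := by
  obtain ⟨k, hk⟩ := six_dvd_cube_sub c
  have hs2 : s ^ 2 = 1 := by rcases hs with rfl | rfl <;> norm_num
  refine ⟨-(s * b - a) * k, ?_⟩
  simp only [etaExponent]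
  linear_combination (-4 * (s * b - a)) * hk - 2 * s * (c ^ 2 - 1) * hdet
    + 4 * a * c * (c ^ 2 - 1) * hs2

lemma EtaLaw.shift {a b c d s : ℤ} (hs : s = 1 ∨ s = -1) (hsc : s * c = |c|)
    (hdet : a * d - b * c = 1) (hd : Odd d) (hlt : 2 * |c| < d)
    (h : EtaLaw a (b - 2 * s * a) c (d - 2 * s * c)) : EtaLaw a b c d := by
  intro τ hτ
  have h1 := h (τ + (2 * s : ℤ)) (by simpa using hτ)
  rw [dedekindEta_add_intCast] at h1
  have e1 : (c : ℂ) * (τ + (2 * s : ℤ)) + (d - 2 * s * c : ℤ) = c * τ + d := by push_cast; ring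
  have e2' : (a : ℂ) * (τ + (2 * s : ℤ)) + (b - 2 * s * a : ℤ) = a * τ + b := by push_cast; ring
  rw [e1, e2'] at h1
  rw [h1]
  suffices hm : etaMultiplier a (b - 2 * s * a) c (d - 2 * s * c) * e2 ((2 * s : ℤ) / 24) =
      etaMultiplier a b c d by rw [← hm]; ring
  obtain ⟨n, hn⟩ : ∃ n : ℕ, d - 2 * s * c = n := Int.eq_ofNat_of_zero_le (by
    rw [mul_assoc, hsc]; linarith)
  have hdn : d = ((n + 2 * c.natAbs : ℕ) : ℤ) := by
    push_cast; rw [← hn, mul_assoc, hsc]; ring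
  have hnodd : Odd n := by
    have : Odd (n : ℤ) := by
      rw [← hn]; exact hd.sub_even ⟨s * c, by ring⟩
    exact_mod_cast this
  have hexp := etaExponent_shift hdet hs
  simp only [etaMultiplier, hn] at hexp ⊢
  rw [mul_assoc, ← e2_add, ← add_div, ← Int.cast_add]
  rw [Int.toNat_natCast, show d.toNat = n + 2 * c.natAbs by omega, jacobiSym_add_two_mul c hnodd]
  have hcases : c % 4 = 0 ∨ c % 4 = 1 ∨ c % 4 = 2 ∨ c % 4 = 3 := by omega
  split_ifs with hc
  · rw [e2_div_neg (m := etaExponent a b c d) (n := etaExponent a (b - 2 * s * a) c n + 2 * s)]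
    · push_cast; ring
    · have : (24 : ℤ) ∣ 6 * s * c * (1 - c) - 12 := by
        obtain ⟨k, hk | hk⟩ : ∃ k, c = 4 * k + 2 ∨ c = 4 * k + 3 := ⟨c / 4, by omega⟩ <;>
        rcases hs with rfl | rfl <;> subst hk
        · exact ⟨-4 * k ^ 2 - 3 * k - 1, by ring⟩
        · exact ⟨4 * k ^ 2 + 3 * k, by ring⟩
        · exact ⟨-4 * k ^ 2 - 5 * k - 2, by ring⟩
        · exact ⟨4 * k ^ 2 + 5 * k + 1, by ring⟩
      have := dvd_add hexp this
      rwa [sub_add_sub_cancel] at this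
  · rw [e2_div_congr (m := etaExponent a b c d) (n := etaExponent a (b - 2 * s * a) c n + 2 * s)]
    have : (24 : ℤ) ∣ 6 * s * c * (1 - c) := by
      obtain ⟨k, hk | hk⟩ : ∃ k, c = 4 * k ∨ c = 4 * k + 1 := ⟨c / 4, by omega⟩ <;> subst hk
      · exact ⟨s * k * (1 - 4 * k), by ring⟩
      · exact ⟨-s * k * (4 * k + 1), by ring⟩
    have := dvd_add hexp this
    rwa [sub_add_cancel] at this

lemma etaExponent_lower {a b c d s : ℤ} (hdet : a * d - b * c = 1) (hs : s = 1 ∨ s = -1)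
    (hd : Odd d) :
    (24 : ℤ) ∣ etaExponent a b c d - (etaExponent (a - s * b) b (c - s * d) d - s) := by
  have hs2 : s ^ 2 = 1 := by rcases hs with rfl | rfl <;> norm_num
  have key : etaExponent a b c d - (etaExponent (a - s * b) b (c - s * d) d - s) =
      -(2 * s * (a - s * b) + b) * (d ^ 3 - d) := by
    simp only [etaExponent]
    linear_combination (s * 1 - 2 * s * (1 - d ^ 2)) * hdet + (b * d - b * d ^ 3) * hs2
  rw [key]
  apply Dvd.dvd.mul_left
  have h3 : (3 : ℤ) ∣ d ^ 3 - d := (by norm_num : (3 : ℤ) ∣ 6).trans (six_dvd_cube_sub d)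
  have h8 : (8 : ℤ) ∣ d ^ 3 - d := by
    rw [show d ^ 3 - d = d * (d ^ 2 - 1) by ring]
    exact (Int.eight_dvd_sq_sub_one_of_odd hd).mul_left d
  exact IsCoprime.mul_dvd (x := 8) (y := 3) (by norm_num) h8 h3

lemma mul_add_mem_slitPlane (c : ℤ) {d : ℤ} (hd : 0 < d) {τ : ℂ} (hτ : 0 < τ.im) :
    (c * τ + d : ℂ) ∈ Complex.slitPlane := by
  rw [Complex.mem_slitPlane_iff]
  by_cases hc : c = 0
  · left; simpa [hc] using hd
  · right; simp [hc, hτ.ne']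

lemma EtaLaw.lower {a b c d s : ℤ} (hs : s = 1 ∨ s = -1)
    (hdet : a * d - b * c = 1) (hd : Odd d) (hpos : 0 < d)
    (h : EtaLaw (a - s * b) b (c - s * d) d) : EtaLaw a b c d := by
  intro τ hτ
  have hw : ((s : ℂ) * τ + 1) ∈ Complex.slitPlane := by
    simpa using mul_add_mem_slitPlane s one_pos hτ
  have hw0 := Complex.slitPlane_ne_zero hw
  have hτ' : 0 < (τ / (s * τ + 1)).im := by
    have h0 := Complex.normSq_pos.mpr hw0
    have : (τ / (s * τ + 1)).im = τ.im / Complex.normSq (s * τ + 1) := by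
      rw [Complex.div_im]
      simp
      field_simp
      ring
    rw [this]; positivity
  have h1 := h _ hτ'
  have hz := mul_add_mem_slitPlane (c - s * d) hpos hτ'
  have e1 : (((c - s * d : ℤ) : ℂ) * (τ / (s * τ + 1)) + d) * (s * τ + 1) = c * τ + d := by
    push_cast
    field_simp
    ring
  have e3 : (((a - s * b : ℤ) : ℂ) * (τ / (s * τ + 1)) + b) * (s * τ + 1) = a * τ + b := by
    push_cast
    field_simp
    ring
  have e4 : (((a - s * b : ℤ) : ℂ) * (τ / (s * τ + 1)) + b) /
      (((c - s * d : ℤ) : ℂ) * (τ / (s * τ + 1)) + d) = (a * τ + b) / (c * τ + d) := by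
    rw [← e1, ← e3, mul_div_mul_right _ _ hw0]
  rw [e4, dedekindEta_lower hτ] at h1
  have hsq := sqrt_mul_of_im hz hw
    (fun h2 h3 => by
      rw [e1]
      have h2' : 0 ≤ c - s * d := by
        by_contra! hlt
        have : ((c - s * d : ℤ) : ℝ) * (τ / (s * τ + 1)).im < 0 :=
          mul_neg_of_neg_of_pos (by exact_mod_cast hlt) hτ'
        simp at h2 this
        linarith
      have h3' : 0 ≤ s := by
        by_contra! hlt
        have : (s : ℝ) * τ.im < 0 := mul_neg_of_neg_of_pos (by exact_mod_cast hlt) hτ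
        simp at h3
        linarith
      have : (0 : ℝ) ≤ c := by
        have : 0 ≤ c := by nlinarith
        exact_mod_cast this
      simp
      positivity)
    (fun h2 h3 => by
      rw [e1]
      have h2' : c - s * d < 0 := by
        by_contra! hlt
        have : 0 ≤ ((c - s * d : ℤ) : ℝ) * (τ / (s * τ + 1)).im :=
          mul_nonneg (by exact_mod_cast hlt) hτ'.le
        simp at h2 this
        linarith
      have h3' : s < 0 := by
        by_contra! hlt
        have : 0 ≤ (s : ℝ) * τ.im := mul_nonneg (by exact_mod_cast hlt) hτ.le
        simp at h3
        linarith
      have : (c : ℝ) < 0 := by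
        have : c < 0 := by nlinarith
        exact_mod_cast this
      simpa using mul_neg_of_neg_of_pos this hτ)
  rw [e1] at hsq
  rw [h1, hsq]
  suffices hm : etaMultiplier (a - s * b) b (c - s * d) d * e2 (-s / 24) =
      etaMultiplier a b c d by rw [← hm]; ring
  have hJ : J(c - s * d | d.toNat) = J(c | d.toNat) :=
    jacobiSym.mod_left' (by rw [Int.toNat_of_nonneg hpos.le]; simp)
  rw [etaMultiplier, etaMultiplier, hJ, mul_assoc, ← e2_add, ← add_div,
    e2_div_congr (etaExponent_lower hdet hs hd)]
  push_cast
  ring_nf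

/-- Petersson's formula for the eta multiplier. -/
theorem etaLaw {a b c d : ℤ} (hdet : a * d - b * c = 1) (hd : Odd d) (hpos : 0 < d) :
    EtaLaw a b c d := by
  induction hn : c.natAbs + d.toNat using Nat.strong_induction_on generalizing a b c d with
  | _ n ih =>
  by_cases hc : c = 0
  · subst hc
    have had : a * d = 1 := by linarith
    obtain rfl : d = 1 := by
      rcases Int.eq_one_or_neg_one_of_mul_eq_one' had with h | h <;> omega
    obtain rfl : a = 1 := by linarith
    intro τ hτ
    simp [etaMultiplier, etaExponent, dedekindEta_add_intCast, Complex.sqrt]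
  obtain ⟨s, hs, hsc⟩ : ∃ s : ℤ, (s = 1 ∨ s = -1) ∧ s * c = |c| := by
    rcases le_total 0 c with h | h
    · exact ⟨1, .inl rfl, by rw [abs_of_nonneg h]; ring⟩
    · exact ⟨-1, .inr rfl, by rw [abs_of_nonpos h]; ring⟩
  have habs : 0 < |c| := abs_pos.mpr hc
  have hs2 : s ^ 2 = 1 := by rcases hs with rfl | rfl <;> norm_num
  have hd2 : d % 2 = 1 := Int.odd_iff.mp hd
  rcases lt_or_ge (2 * |c|) d with hlt | hge
  · refine EtaLaw.shift hs hsc hdet hd hlt (ih _ ?_ ?_ ?_ ?_ rfl)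
    · rw [← hn, mul_assoc, hsc]; omega
    · linear_combination hdet
    · exact hd.sub_even ⟨s * c, by ring⟩
    · rw [mul_assoc, hsc]; linarith
  · refine EtaLaw.lower hs hdet hd hpos (ih _ ?_ ?_ hd hpos rfl)
    · rw [← hn]
      rcases hs with rfl | rfl <;> omega
    · linear_combination hdet

end EtaMultiplier

/-! ### Invariance of eta products under `Γ₀(N)` -/

/-- Conditions on a frame shape ensuring that its eta product is invariant under `Γ₀(N)`. -/
structure IsLevel (N : ℕ) (P : List (ℕ × ℤ)) : Prop where
  pos : ∀ p ∈ P, 0 < p.1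
  dvd : ∀ p ∈ P, p.1 ∣ N
  weight : (P.map fun p => p.2).sum = 0
  order_infty : (24 : ℤ) ∣ (P.map fun p => (p.1 : ℤ) * p.2).sum
  order_zero : (24 : ℤ) ∣ (P.map fun p => ((N / p.1 : ℕ) : ℤ) * p.2).sum
  square : IsSquare (P.map fun p => p.1 ^ p.2.natAbs).prod

section Level

open scoped NumberTheorySymbols

variable {N : ℕ} {P : List (ℕ × ℤ)}

lemma etaFrame_add_intCast (h : (24 : ℤ) ∣ (P.map fun p => (p.1 : ℤ) * p.2).sum)
    (τ : ℂ) (m : ℤ) : etaFrame P (τ + m) = etaFrame P τ := by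
  have key : ∀ P : List (ℕ × ℤ), etaFrame P (τ + m) =
      e2 (m / 24) ^ (P.map fun p => (p.1 : ℤ) * p.2).sum * etaFrame P τ := by
    intro P
    induction P with
    | nil => simp [etaFrame]
    | cons p P ih =>
      simp only [etaFrame, List.map_cons, List.prod_cons, List.sum_cons] at ih ⊢
      have : (p.1 : ℂ) * (τ + m) = p.1 * τ + ((p.1 * m : ℤ) : ℂ) := by push_cast; ring
      rw [ih, this, dedekindEta_add_intCast, mul_zpow, zpow_add₀ (e2_ne_zero _), zpow_mul,
        show (((p.1 * m : ℤ) : ℂ) / 24) = ((p.1 : ℤ) : ℂ) * (m / 24) by push_cast; ring,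
        e2_intCast_mul]
      ring
  obtain ⟨k, hk⟩ := h
  rw [key, hk, zpow_mul, ← e2_intCast_mul]
  rw [show ((24 : ℤ) : ℂ) * (m / 24) = (m : ℤ) by push_cast; ring, e2_intCast]
  simp

lemma etaFrame_smul_of_odd_pos (hP : IsLevel N P) {a b c d : ℤ} (hdet : a * d - b * (c * N) = 1)
    (hd : Odd d) (hpos : 0 < d) {τ : ℂ} (hτ : 0 < τ.im) :
    etaFrame P ((a * τ + b) / ((c * N : ℤ) * τ + d)) = etaFrame P τ := by
  set w : ℂ := Complex.sqrt ((c * N : ℤ) * τ + d) with hw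
  have hw0 : w ≠ 0 := sqrt_ne_zero
    (Complex.slitPlane_ne_zero (mul_add_mem_slitPlane (c * N) hpos hτ))
  have hcop : ∀ p ∈ P, (p.1 : ℤ).gcd d.toNat = 1 := by
    intro p hp
    obtain ⟨m, hm⟩ := hP.dvd p hp
    have hNz : (N : ℤ) = p.1 * m := by exact_mod_cast hm
    rw [Int.toNat_of_nonneg hpos.le, ← Int.isCoprime_iff_gcd_eq_one]
    exact ⟨-(b * c * m), a, by rw [← hdet, hNz]; ring⟩
  have hterm : ∀ p ∈ P, dedekindEta (p.1 * ((a * τ + b) / ((c * N : ℤ) * τ + d))) =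
      (J(c * N | d.toNat) * J(p.1 | d.toNat) : ℤ) *
      e2 ((a + d - b * d * (c * N) - 3 * d) * c * (N / p.1 : ℕ) / 24 + b * d * p.1 / 24
        + (d - 1) / 8) * w * dedekindEta (p.1 * τ) := by
    intro p hp
    obtain ⟨m, hm⟩ := hP.dvd p hp
    have hn : 0 < p.1 := hP.pos p hp
    have hdiv : N / p.1 = m := by rw [hm]; exact Nat.mul_div_cancel_left _ hn
    have hnc : (p.1 : ℂ) ≠ 0 := by exact_mod_cast hn.ne'
    have hNc : (N : ℂ) = p.1 * m := by exact_mod_cast hm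
    have hNz : (N : ℤ) = p.1 * m := by exact_mod_cast hm
    have hlaw := etaLaw (a := a) (b := p.1 * b) (c := c * m) (d := d)
      (by rw [← hdet, hNz]; ring) hd hpos (p.1 * τ)
      (by simpa using mul_pos (by exact_mod_cast hn) hτ)
    have e1 : ((c * m : ℤ) : ℂ) * (p.1 * τ) + d = (c * N : ℤ) * τ + d := by
      push_cast; rw [hNc]; ring
    have e3 : ((a : ℂ) * (p.1 * τ) + (p.1 * b : ℤ)) / ((c * N : ℤ) * τ + d) =
        p.1 * ((a * τ + b) / ((c * N : ℤ) * τ + d)) := by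
      push_cast; ring
    rw [e1, e3] at hlaw
    rw [hlaw, ← hw, hdiv]
    congr 2
    rw [etaMultiplier]
    congr 1
    · have h1 : J(c * N | d.toNat) = J(c * m | d.toNat) * J(p.1 | d.toNat) := by
        rw [← jacobiSym.mul_left, hNz]; congr 1; ring
      rw [h1, mul_assoc, ← sq, jacobiSym.sq_one (hcop p hp), mul_one]
    · congr 1
      rw [etaExponent]
      push_cast
      rw [hNc]
      field_simp
      ring
  have hprod : ∀ Q : List (ℕ × ℤ), (∀ p ∈ Q, p ∈ P) →
      etaFrame Q ((a * τ + b) / ((c * N : ℤ) * τ + d)) =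
      (J(c * N | d.toNat) : ℂ) ^ (Q.map fun p => p.2).sum *
      (J((((Q.map fun p => p.1 ^ p.2.natAbs).prod : ℕ) : ℤ) | d.toNat) : ℂ) *
      e2 ((a + d - b * d * (c * N) - 3 * d) * c *
        ((Q.map fun p => ((N / p.1 : ℕ) : ℤ) * p.2).sum : ℤ) / 24
        + b * d * ((Q.map fun p => (p.1 : ℤ) * p.2).sum : ℤ) / 24
        + (d - 1) / 8 * ((Q.map fun p => p.2).sum : ℤ)) *
      w ^ (Q.map fun p => p.2).sum * etaFrame Q τ := by
    intro Q hQ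
    induction Q with
    | nil => simp [etaFrame]
    | cons p Q ih =>
      have ih := ih fun q hq => hQ q (by simp [hq])
      have hp := hQ p (by simp)
      have hJN : (J(c * N | d.toNat) : ℂ) ≠ 0 := by
        refine Int.cast_ne_zero.mpr (jacobiSym.ne_zero ?_)
        rw [Int.toNat_of_nonneg hpos.le, ← Int.isCoprime_iff_gcd_eq_one]
        exact ⟨-b, a, by rw [← hdet]; ring⟩
      have hJp : (J((p.1 : ℤ) | d.toNat) : ℂ) ^ p.2 =
          (J((p.1 ^ p.2.natAbs : ℕ) | d.toNat) : ℂ) := by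
        rw [Nat.cast_pow, jacobiSym.pow_left, Int.cast_pow]
        rcases jacobiSym.eq_one_or_neg_one (hcop p hp) with h | h <;> rw [h]
        · simp
        · rcases Int.natAbs_eq p.2 with h2 | h2
          · conv_lhs => rw [h2]
            rw [zpow_natCast]
          · conv_lhs => rw [h2]
            rw [zpow_neg, zpow_natCast, ← inv_pow]
            norm_num
      simp only [etaFrame, List.map_cons, List.prod_cons, List.sum_cons] at ih ⊢
      rw [ih, hterm p hp, mul_zpow, mul_zpow, mul_zpow, zpow_add₀ hw0, zpow_add₀ hJN,
        Nat.cast_mul (p.1 ^ p.2.natAbs), jacobiSym.mul_left ((p.1 ^ p.2.natAbs : ℕ) : ℤ),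
        ← e2_intCast_mul]
      simp only [Int.cast_mul (J(c * N | d.toNat)), Int.cast_mul (J((p.1 ^ p.2.natAbs : ℕ) | _)),
        Int.cast_add, Int.cast_mul _ p.2, Int.cast_natCast]
      rw [mul_zpow, hJp]
      have hsplit : ∀ A B C x₁ x₂ x₃ y₁ y₂ y₃ : ℂ,
          e2 (A * (y₁ * x₃ + x₁) / 24 + B * (y₂ * x₃ + x₂) / 24 + C * (x₃ + y₃)) =
          e2 (x₃ * (A * y₁ / 24 + B * y₂ / 24 + C)) *
            e2 (A * x₁ / 24 + B * x₂ / 24 + C * y₃) := by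
        intros
        rw [← e2_add]
        congr 1
        ring
      rw [hsplit]
      ring
  rw [hprod P fun _ h => h, hP.weight]
  obtain ⟨k₁, h₁⟩ := hP.order_infty
  obtain ⟨k₂, h₂⟩ := hP.order_zero
  rw [h₁, h₂]
  have hexp : ((a + d - b * d * (c * N) - 3 * d) * c * ((24 * k₂ : ℤ) : ℂ) / 24
      + b * d * ((24 * k₁ : ℤ) : ℂ) / 24 + (d - 1) / 8 * ((0 : ℤ) : ℂ)) =
      (((a + d - b * d * (c * N) - 3 * d) * c * k₂ + b * d * k₁ : ℤ) : ℂ) := by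
    push_cast; ring
  have hJ : J(((P.map fun p => p.1 ^ p.2.natAbs).prod : ℕ) | d.toNat) = 1 := by
    have hne : ∀ Q : List (ℕ × ℤ), (∀ p ∈ Q, p ∈ P) →
        J(((Q.map fun p => p.1 ^ p.2.natAbs).prod : ℕ) | d.toNat) ≠ 0 := by
      intro Q hQ
      induction Q with
      | nil => simp
      | cons p Q ih =>
        rw [List.map_cons, List.prod_cons, Nat.cast_mul, jacobiSym.mul_left, Nat.cast_pow,
          jacobiSym.pow_left]
        exact mul_ne_zero (pow_ne_zero _ (jacobiSym.ne_zero (hcop p (hQ p (by simp)))))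
          (ih fun q hq => hQ q (by simp [hq]))
    have hne := hne P fun _ h => h
    obtain ⟨r, hr⟩ := hP.square
    rw [hr, Nat.cast_mul, jacobiSym.mul_left] at hne ⊢
    rcases jacobiSym.trichotomy r d.toNat with h | h | h <;> rw [h] at hne ⊢ <;> simp at hne ⊢
  rw [hexp, e2_intCast, hJ]
  simp

theorem etaFrame_smul (hP : IsLevel N P) {a b c d : ℤ} (hdet : a * d - b * (c * N) = 1)
    {τ : ℂ} (hτ : 0 < τ.im) :
    etaFrame P ((a * τ + b) / ((c * N : ℤ) * τ + d)) = etaFrame P τ := by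
  have hodd : ∀ {a b c d : ℤ}, a * d - b * (c * N) = 1 → Odd d → ∀ {τ : ℂ}, 0 < τ.im →
      etaFrame P ((a * τ + b) / ((c * N : ℤ) * τ + d)) = etaFrame P τ := by
    intro a b c d hdet hd τ hτ
    rcases lt_trichotomy 0 d with h | h | h
    · exact etaFrame_smul_of_odd_pos hP hdet hd h hτ
    · rw [← h] at hd; simp at hd
    · have := etaFrame_smul_of_odd_pos hP (a := -a) (b := -b) (c := -c) (d := -d)
        (by rw [← hdet]; ring) hd.neg (by linarith) hτ
      rw [← this]
      congr 1
      rw [← neg_div_neg_eq]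
      push_cast
      ring
  rcases Int.even_or_odd d with hd | hd
  · have hc : Odd (c * N) := by
      by_contra h
      rw [Int.not_odd_iff_even] at h
      have : Even (1 : ℤ) := by rw [← hdet]; exact (hd.mul_left a).sub (h.mul_left b)
      simp at this
    have h1 := hodd (a := a) (b := b + a) (c := c) (d := d + c * N) (by rw [← hdet]; ring)
      (hd.add_odd hc) (τ := τ + (-1 : ℤ)) (by simpa using hτ)
    rw [etaFrame_add_intCast hP.order_infty] at h1
    rw [← h1]
    congr 1
    push_cast
    ring
  · exact hodd hdet hd hτ

end Level

/-! ### The absolute value of eta products -/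

section Modulus

/-- The `SL₂(ℤ)`-invariant function `|η(τ)|⁴ Im τ`. -/
def etaHeight (τ : ℂ) : ℝ := ‖dedekindEta τ‖ ^ 4 * τ.im

lemma etaHeight_smul_coe (γ : SL(2, ℤ)) (τ : ℍ) :
    etaHeight ((γ • τ : ℍ) : ℂ) = etaHeight τ := by
  have hγ : γ ∈ Subgroup.closure {ModularGroup.S, ModularGroup.T} := by
    simp [SpecialLinearGroup.SL2Z_generators]
  induction hγ using Subgroup.closure_induction generalizing τ with
  | mem x hx =>
    rcases hx with rfl | rfl
    · rw [UpperHalfPlane.modular_S_smul]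
      have him : ((-(τ : ℂ))⁻¹).im = (τ : ℂ).im / ‖(τ : ℂ)‖ ^ 2 := by
        rw [Complex.inv_im, Complex.normSq_neg, Complex.normSq_eq_norm_sq]; simp
      have h0 : ‖(τ : ℂ)‖ ≠ 0 := by simpa using τ.ne_zero
      have hs : ‖Complex.sqrt ((τ : ℂ) / Complex.I)‖ ^ 4 = ‖(τ : ℂ)‖ ^ 2 := by
        rw [← norm_pow, show ∀ z : ℂ, z ^ 4 = (z * z) ^ 2 by intro z; ring, sqrt_mul_self]
        simp
      simp only [etaHeight]
      rw [him, show (-(τ : ℂ))⁻¹ = -1 / τ by rw [inv_neg, neg_div, one_div],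
        dedekindEta_neg_inv τ.im_pos, norm_mul, mul_pow, hs]
      field_simp
    · rw [UpperHalfPlane.modular_T_smul]
      have := dedekindEta_add_intCast τ 1
      rw [UpperHalfPlane.coe_vadd]
      simp only [etaHeight]
      push_cast at this ⊢
      rw [add_comm, this, norm_mul, norm_e2]
      simp
  | one => simp
  | mul x y _ _ hx hy => rw [mul_smul, hx, hy]
  | inv x _ hx => rw [← hx (x⁻¹ • τ), smul_inv_smul]

lemma coe_smul_eq (g : SL(2, ℝ)) (τ : ℍ) :
    ((g • τ : ℍ) : ℂ) = (g 0 0 * τ + g 0 1) / (g 1 0 * τ + g 1 1) := by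
  rw [UpperHalfPlane.coe_specialLinearGroup_apply]; simp

lemma etaHeight_smul {a b c d : ℤ} (hdet : a * d - b * c = 1) {τ : ℂ} (hτ : 0 < τ.im) :
    etaHeight ((a * τ + b) / (c * τ + d)) = etaHeight τ := by
  let γ : SL(2, ℤ) := ⟨!![a, b; c, d], by rw [Matrix.det_fin_two_of]; exact hdet⟩
  have h1 := etaHeight_smul_coe γ ⟨τ, hτ⟩
  rw [UpperHalfPlane.coe_specialLinearGroup_apply γ] at h1
  simpa [γ] using h1

lemma im_mobius_pos {a b c d : ℝ} (hdet : 0 < a * d - b * c) {τ : ℂ} (hτ : 0 < τ.im) :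
    0 < ((a * τ + b) / (c * τ + d)).im := by
  have hne : (c : ℂ) * τ + d ≠ 0 := by
    intro h
    have h1 := congrArg Complex.im h
    have h2 := congrArg Complex.re h
    simp [hτ.ne'] at h1 h2
    subst h1
    simp at h2
    subst h2
    simp at hdet
  have : ((a * τ + b) / (c * τ + d)).im = (a * d - b * c) * τ.im / Complex.normSq (c * τ + d) := by
    rw [Complex.div_im]
    simp
    ring
  rw [this]
  have := Complex.normSq_pos.mpr hne
  positivity

/-- The rate of decay of `η(nτ)` at the cusp `a / c`. -/
lemma tendsto_norm_eta_cusp {a b c d : ℤ} (hdet : a * d - b * c = 1) {n : ℕ} (hn : 0 < n) :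
    ∃ C : ℝ, 0 < C ∧ Tendsto (fun z : ℍ => ‖dedekindEta (n * ((a * z + b) / (c * z + d)))‖ ^ 4 *
      (((a * z + b) / (c * z + d) : ℂ).im / z.im) *
      Real.exp (Real.pi / 3 * z.im * ((c.gcd n : ℝ) ^ 2 / n))) atImInfty (𝓝 C) := by
  obtain ⟨r, hr⟩ : ((c.gcd n : ℕ) : ℤ) ∣ n := Int.gcd_dvd_right ..
  obtain ⟨c', hc'⟩ : ((c.gcd n : ℕ) : ℤ) ∣ c := Int.gcd_dvd_left ..
  have hbez := Int.gcd_eq_gcd_ab c n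
  have hp0 : 0 < c.gcd n := Int.gcd_pos_of_ne_zero_right c (by exact_mod_cast hn.ne')
  generalize c.gcd n = p at *
  have hr0 : 0 < r := by
    have : 0 < (p : ℤ) * r := by rw [← hr]; exact_mod_cast hn
    exact pos_of_mul_pos_right this (by positivity)
  have hcop : IsCoprime (r * a) c' := by
    have h1 : IsCoprime r c' := by
      refine ⟨c.gcdB n, c.gcdA n, ?_⟩
      have hp : (p : ℤ) ≠ 0 := by exact_mod_cast hp0.ne'
      apply mul_left_cancel₀ hp
      generalize c.gcdA n = x at *
      generalize c.gcdB n = y at *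
      linear_combination -hbez - x * hc' - y * hr
    exact h1.mul_left ⟨d, -b * p, by rw [← hdet, hc']; ring⟩
  obtain ⟨u, v, huv⟩ := hcop
  have hrC : (r : ℂ) ≠ 0 := by exact_mod_cast hr0.ne'
  have hrR : (0 : ℝ) < r := by exact_mod_cast hr0
  have hpR : (0 : ℝ) < p := by exact_mod_cast hp0
  have hnR : (n : ℝ) = p * r := by exact_mod_cast hr
  have hnC : (n : ℂ) = p * r := by exact_mod_cast hr
  have hcC : (c : ℂ) = p * c' := by exact_mod_cast hc'
  have hdetC : (a : ℂ) * d - b * c = 1 := by exact_mod_cast hdet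
  have huvC : (u : ℂ) * (r * a) + v * c' = 1 := by exact_mod_cast huv
  set t : ℍ → ℂ := fun z => (p * z + (u * n * b + v * d : ℤ)) / r with ht
  have htim : ∀ z, (t z).im = p / r * z.im := by
    intro z
    have : t z = ((p / r : ℝ) : ℂ) * z + (((u * n * b + v * d : ℤ) / r : ℝ) : ℂ) := by
      simp only [ht]; push_cast; field_simp
    rw [this, Complex.add_im, Complex.im_ofReal_mul,
      Complex.ofReal_im, add_zero]
    rfl
  have htpos : ∀ z, 0 < (t z).im := fun z => by
    rw [htim]; exact mul_pos (div_pos hpR hrR) z.im_pos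
  have hrep : ∀ z : ℍ, (n : ℂ) * ((a * z + b) / (c * z + d)) =
      ((r * a : ℤ) * t z + (-v : ℤ)) / (c' * t z + u) := by
    intro z
    have e1 : ((r * a : ℤ) : ℂ) * t z + (-v : ℤ) = n * (a * z + b) / r := by
      simp only [ht]
      field_simp
      push_cast
      rw [hnC]
      linear_combination (r * b * p : ℂ) * huvC + r * v * hdetC + r * v * b * hcC
    have e2 : (c' : ℂ) * t z + u = (c * z + d) / r := by
      simp only [ht]
      field_simp
      push_cast
      rw [hnC, hcC]
      linear_combination (d : ℂ) * huvC - u * r * hdetC - u * r * b * hcC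
    rw [e1, e2, div_div_div_cancel_right₀ hrC, mul_div_assoc]
  have hmain : ∀ z : ℍ, ‖dedekindEta (n * ((a * z + b) / (c * z + d)))‖ ^ 4 *
      (((a * z + b) / (c * z + d) : ℂ).im / z.im) *
      Real.exp (Real.pi / 3 * z.im * ((p : ℝ) ^ 2 / n)) =
      p / (r * n) * ‖eulerProduct (e2 (t z))‖ ^ 4 := by
    intro z
    have h1 := etaHeight_smul (a := r * a) (b := -v) (c := c') (d := u)
      (by rw [← huv]; ring) (htpos z)
    rw [← hrep, etaHeight, etaHeight, htim, ← Complex.ofReal_natCast, Complex.im_ofReal_mul,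
      Complex.ofReal_natCast, dedekindEta_eq (t z), norm_mul, norm_e2, mul_pow, ← Real.exp_nat_mul,
      show (t z / 24).im = (t z).im / 24 by simp, htim] at h1
    have hz := z.im_pos
    have hn0 : (n : ℝ) ≠ 0 := by positivity
    have hexp : Real.exp (Real.pi / 3 * z.im * ((p : ℝ) ^ 2 / n)) *
        Real.exp ((4 : ℕ) * (-2 * Real.pi * (p / r * z.im / 24))) = 1 := by
      rw [← Real.exp_add, Real.exp_eq_one_iff, hnR]
      field_simp
      push_cast
      ring
    generalize Real.exp (Real.pi / 3 * z.im * ((p : ℝ) ^ 2 / n)) = X at *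
    generalize Real.exp ((4 : ℕ) * (-2 * Real.pi * (p / r * z.im / 24))) = Y at *
    generalize ‖dedekindEta (n * ((a * z + b) / (c * z + d)))‖ = H at *
    generalize ((a * z + b) / (c * z + d) : ℂ).im = w at *
    field_simp at h1 ⊢
    linear_combination X * h1 + p * z.im * ‖eulerProduct (e2 (t z))‖ ^ 4 * hexp
  refine ⟨p / (r * n), by positivity, ?_⟩
  simp only [hmain]
  have htend : Tendsto (fun z : ℍ => (⟨t z, htpos z⟩ : ℍ)) atImInfty atImInfty := by
    rw [atImInfty, tendsto_comap_iff]
    refine (Tendsto.const_mul_atTop (div_pos hpR hrR) tendsto_comap).congr fun z => ?_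
    exact (htim z).symm
  have h2 : Tendsto (fun z => eulerProduct (e2 (t z))) atImInfty (𝓝 1) := by
    rw [← eulerProduct_zero]
    exact analyticAt_eulerProduct.continuousAt.tendsto.comp
      ((tendsto_e2_atImInfty.mono_right nhdsWithin_le_nhds).comp htend)
  simpa using (h2.norm.pow 4).const_mul ((p : ℝ) / (r * n))

end Modulus

section CuspGrowth

variable {N : ℕ} {P : List (ℕ × ℤ)}

lemma tendsto_norm_etaFrame_cusp {a b c d : ℤ} (hdet : a * d - b * c = 1)
    (hP : ∀ p ∈ P, 0 < p.1) (hw : (P.map fun p => p.2).sum = 0) :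
    ∃ C : ℝ, 0 < C ∧ Tendsto (fun z : ℍ => ‖etaFrame P ((a * z + b) / (c * z + d))‖ ^ 4 *
      Real.exp (Real.pi / 3 * z.im * (P.map fun p => p.2 * ((c.gcd p.1 : ℝ) ^ 2 / p.1)).sum))
      atImInfty (𝓝 C) := by
  have key : ∀ P : List (ℕ × ℤ), (∀ p ∈ P, 0 < p.1) → ∃ C : ℝ, 0 < C ∧
      Tendsto (fun z : ℍ => ‖etaFrame P ((a * z + b) / (c * z + d))‖ ^ 4 *
      (((a * z + b) / (c * z + d) : ℂ).im / z.im) ^ (P.map fun p => p.2).sum *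
      Real.exp (Real.pi / 3 * z.im * (P.map fun p => p.2 * ((c.gcd p.1 : ℝ) ^ 2 / p.1)).sum))
      atImInfty (𝓝 C) := by
    intro P hP
    induction P with
    | nil => exact ⟨1, one_pos, by simp [etaFrame]⟩
    | cons p P ih =>
      obtain ⟨C, hC, hlim⟩ := ih fun q hq => hP q (by simp [hq])
      obtain ⟨C', hC', hlim'⟩ := tendsto_norm_eta_cusp hdet (hP p (by simp))
      refine ⟨C' ^ p.2 * C, by positivity, ((hlim'.zpow₀ p.2 (.inl hC'.ne')).mul hlim).congr ?_⟩
      intro z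
      have hz : 0 < ((a * z + b) / (c * z + d) : ℂ).im / z.im := by
        have : (0 : ℝ) < a * d - b * c := by
          rw [show (a : ℝ) * d - b * c = 1 by exact_mod_cast hdet]; exact one_pos
        have := im_mobius_pos this z.im_pos
        exact div_pos (by simpa using this) z.im_pos
      simp only [etaFrame, List.map_cons, List.prod_cons, List.sum_cons]
      rw [zpow_add₀ hz.ne', mul_add, Real.exp_add, norm_mul, norm_zpow,
        show Real.pi / 3 * z.im * (p.2 * ((c.gcd p.1 : ℝ) ^ 2 / p.1)) =
          p.2 * (Real.pi / 3 * z.im * ((c.gcd p.1 : ℝ) ^ 2 / p.1)) by ring,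
        mul_comm (p.2 : ℝ) (Real.pi / 3 * z.im * _), Real.exp_mul _ (p.2 : ℝ), Real.rpow_intCast,
        mul_zpow, mul_zpow, ← zpow_natCast _ 4, ← zpow_mul, mul_pow, ← zpow_natCast _ 4,
        ← zpow_natCast _ 4, ← zpow_mul, mul_comm p.2]
      ring
  obtain ⟨C, hC, h⟩ := key P hP
  rw [hw] at h
  exact ⟨C, hC, by simpa using h⟩

/-- Bounded behaviour of `1/η_π` at a cusp. -/
lemma isBigO_etaFrame_inv_cusp {a b c d : ℤ} (hdet : a * d - b * c = 1)
    (hP : ∀ p ∈ P, 0 < p.1) (hw : (P.map fun p => p.2).sum = 0)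
    (hc : (P.map fun p => p.2 * ((c.gcd p.1 : ℝ) ^ 2 / p.1)).sum ≤ 0) :
    IsBoundedAtImInfty fun z : ℍ => (etaFrame P ((a * z + b) / (c * z + d)))⁻¹ := by
  obtain ⟨C, hC, h⟩ := tendsto_norm_etaFrame_cusp hdet hP hw
  rw [UpperHalfPlane.isBoundedAtImInfty_iff]
  have h1 := h.eventually (lt_mem_nhds (half_lt_self hC))
  rw [Filter.Eventually, UpperHalfPlane.atImInfty_mem] at h1
  obtain ⟨A, hA⟩ := h1
  refine ⟨(C / 2)⁻¹ + 1, A, fun z hz => ?_⟩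
  have h2 : C / 2 < ‖etaFrame P ((a * z + b) / (c * z + d))‖ ^ 4 := by
    refine (hA z hz).trans_le (mul_le_of_le_one_right (by positivity) ?_)
    rw [Real.exp_le_one_iff]
    exact mul_nonpos_of_nonneg_of_nonpos (by have := z.im_pos; positivity) hc
  rw [norm_inv]
  set x := ‖etaFrame P ((a * z + b) / (c * z + d))‖
  have hx0 : x ≠ 0 := by
    intro h; rw [h] at h2; norm_num at h2; linarith
  have hx : 0 < x := lt_of_le_of_ne (norm_nonneg _) hx0.symm
  rcases le_total 1 x with h3 | h3
  · have := inv_le_one_of_one_le₀ h3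
    have : 0 < (C / 2)⁻¹ := by positivity
    linarith
  · have : C / 2 < x := h2.trans_le (pow_le_of_le_one hx.le h3 (by norm_num))
    have := inv_anti₀ (half_pos hC) this.le
    linarith

lemma periodic_comp_ofComplex {f : ℍ → ℂ} {h : ℝ} (hper : ∀ z : ℍ, f (h +ᵥ z) = f z) :
    Function.Periodic (f ∘ ofComplex) h := by
  intro w
  by_cases hw : 0 < w.im
  · have hw' : 0 < (w + h).im := by simpa using hw
    simp only [Function.comp_apply, ofComplex_apply_of_im_pos hw, ofComplex_apply_of_im_pos hw']
    rw [← hper ⟨w, hw⟩]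
    congr 1
    ext
    simp [add_comm]
  · have hw' : ¬ 0 < (w + h).im := by simpa using hw
    simp only [Function.comp_apply]
    rw [ofComplex_apply_of_im_nonpos (not_lt.mp hw), ofComplex_apply_of_im_nonpos (not_lt.mp hw')]

/-- A bounded periodic holomorphic function on `ℍ` has a limit at `i∞`. -/
lemma exists_tendsto_of_periodic {f : ℍ → ℂ} {h : ℝ} (hh : 0 < h)
    (hper : ∀ z : ℍ, f (h +ᵥ z) = f z) (hf : MDifferentiable 𝓘(ℂ) 𝓘(ℂ) f)
    (hbdd : IsBoundedAtImInfty f) : ∃ t, Tendsto f atImInfty (𝓝 t) := by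
  have hper' := periodic_comp_ofComplex hper
  have hd : DifferentiableOn ℂ (f ∘ ofComplex) upperHalfPlaneSet :=
    (analyticOnNhd_comp_ofComplex hf).differentiableOn
  have hlim := Function.Periodic.tendsto_at_I_inf hh hper' (by
    have : ∀ᶠ z in comap Complex.im atTop, 0 < z.im :=
      tendsto_comap.eventually (eventually_gt_atTop 0)
    filter_upwards [this] with z hz
    exact hd.differentiableAt (isOpen_upperHalfPlaneSet.mem_nhds hz))
    (hbdd.comp_tendsto tendsto_comap_im_ofComplex)
  refine ⟨_, (hlim.comp tendsto_coe_atImInfty).congr fun z => by simp⟩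

/-- The modulus of an eta product is invariant under an Atkin-Lehner involution which permutes the
frame shape. -/
lemma norm_etaFrame_atkinLehner (hP : ∀ p ∈ P, 0 < p.1) (hN : ∀ p ∈ P, p.1 ∣ N)
    (hw : (P.map fun p => p.2).sum = 0) {e : ℕ} (he : e ∣ N) (he0 : 0 < e)
    (hperm : (P.map fun p => (p.1 * e / (p.1.gcd e) ^ 2, p.2)).Perm P)
    {a b c d : ℤ} (hdet : a * d * e - b * c * (N / e : ℕ) = 1) {τ : ℂ} (hτ : 0 < τ.im) :
    ‖etaFrame P ((a * e * τ + b) / (c * N * τ + d * e))‖ = ‖etaFrame P τ‖ := by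
  set σ : ℂ := (a * e * τ + b) / (c * N * τ + d * e) with hσ
  have hσim : 0 < σ.im := by
    have h := im_mobius_pos (a := a * e) (b := b) (c := c * N) (d := d * e) ?_ hτ
    · simpa [hσ] using h
    · obtain ⟨m, rfl⟩ := he
      rw [Nat.mul_div_cancel_left _ he0] at hdet
      have hdetR : (a : ℝ) * d * e - b * c * m = 1 := by exact_mod_cast hdet
      have : (a : ℝ) * e * (d * e) - b * (c * (e * m : ℕ)) = e := by
        push_cast; linear_combination (e : ℝ) * hdetR
      rw [this]
      positivity
  have hterm : ∀ p ∈ P, etaHeight (p.1 * σ) = etaHeight ((p.1 * e / (p.1.gcd e) ^ 2 : ℕ) * τ) := by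
    intro p hp
    have hp0 := hP p hp
    obtain ⟨m, hm⟩ := Nat.lcm_dvd (hN p hp) he
    obtain ⟨n₁, e₁, -, hn₁, he₁⟩ := Nat.exists_coprime p.1 e
    have hg : 0 < p.1.gcd e := Nat.gcd_pos_of_pos_left _ hp0
    have hlcm := Nat.gcd_mul_lcm p.1 e
    generalize p.1.gcd e = g at *
    have hdiv : p.1 * e / g ^ 2 = n₁ * e₁ := by
      rw [hn₁, he₁]
      exact Nat.div_eq_of_eq_mul_left (by positivity) (by ring)
    have hNm : N = g * n₁ * e₁ * m := by
      rw [hm]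
      congr 1
      apply Nat.eq_of_mul_eq_mul_left hg
      rw [hlcm, hn₁, he₁]
      ring
    have hNe : N / e = n₁ * m := by
      refine Nat.div_eq_of_eq_mul_left he0 ?_
      rw [hNm, he₁]
      ring
    rw [hNe] at hdet
    have hg0 : (g : ℂ) ≠ 0 := by exact_mod_cast hg.ne'
    have hx : 0 < (((n₁ * e₁ : ℕ) : ℂ) * τ).im := by
      rw [← Complex.ofReal_natCast, Complex.im_ofReal_mul]
      have : 0 < n₁ * e₁ := by
        refine Nat.pos_of_ne_zero fun h => ?_
        rcases mul_eq_zero.mp h with h | h <;> simp_all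
      exact mul_pos (by exact_mod_cast this) hτ
    rw [hdiv, ← etaHeight_smul (a := a * g) (b := n₁ * b) (c := c * m) (d := d * e₁)
      (by rw [← hdet, he₁]; push_cast; ring) hx]
    congr 1
    rw [hσ, hNm, hn₁, he₁, mul_div_assoc']
    symm
    rw [← mul_div_mul_left _ _ hg0]
    push_cast
    congr 1 <;> ring
  have hprod : ∀ Q : List (ℕ × ℤ), (∀ p ∈ Q, 0 < p.1) → ∀ {x : ℂ}, 0 < x.im →
      (Q.map fun p => etaHeight (p.1 * x) ^ p.2).prod =
      ‖etaFrame Q x‖ ^ 4 * (Q.map fun p => (p.1 : ℝ) ^ p.2).prod *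
        x.im ^ (Q.map fun p => p.2).sum := by
    intro Q hQ x hx
    induction Q with
    | nil => simp [etaFrame]
    | cons p Q ih =>
      have ih := ih fun q hq => hQ q (by simp [hq])
      simp only [etaFrame, List.map_cons, List.prod_cons, List.sum_cons] at ih ⊢
      rw [ih, etaHeight, ← Complex.ofReal_natCast, Complex.im_ofReal_mul, zpow_add₀ hx.ne',
        mul_zpow, mul_zpow, norm_mul, mul_pow, norm_zpow, ← zpow_natCast _ 4, ← zpow_mul,
        ← zpow_natCast (_ ^ p.2) 4, ← zpow_mul, mul_comm p.2]
      ring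
  have h1 := hprod P hP hσim
  have h2 := hprod P hP hτ
  have h3 : (P.map fun p => etaHeight (p.1 * σ) ^ p.2).prod =
      (P.map fun p => etaHeight (p.1 * τ) ^ p.2).prod := by
    rw [← (hperm.map fun p => etaHeight (p.1 * τ) ^ p.2).prod_eq, List.map_map]
    congr 1
    exact List.map_congr_left fun p hp => by simp [hterm p hp]
  rw [h1, h2, hw] at h3
  have h4 : (P.map fun p => (p.1 : ℝ) ^ p.2).prod ≠ 0 := by
    refine List.prod_ne_zero fun h => ?_
    obtain ⟨p, hp, h⟩ := List.mem_map.mp h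
    have := hP p hp
    exact (zpow_pos (by exact_mod_cast this) _).ne' h
  simp only [zpow_zero, mul_one] at h3
  exact (pow_left_inj₀ (norm_nonneg _) (norm_nonneg _) (by norm_num)).mp (mul_right_cancel₀ h4 h3)

end CuspGrowth

/-! ### The groups `Γ₀(N)+S` -/

/-- `S` is a group of exact divisors of `N`. -/
structure IsExactDivisorGroup (N : ℕ) (S : Set ℕ) : Prop where
  ne_zero : N ≠ 0
  one_mem : 1 ∈ S
  dvd : ∀ e ∈ S, e ∣ N
  coprime : ∀ e ∈ S, e.Coprime (N / e)
  mul_mem : ∀ e ∈ S, ∀ f ∈ S, e * f / e.gcd f ^ 2 ∈ S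

section GroupStructure

variable {N : ℕ} {S : Set ℕ}

lemma IsExactDivisorGroup.pos (h : IsExactDivisorGroup N S) {e : ℕ} (he : e ∈ S) : 0 < e :=
  Nat.pos_of_dvd_of_pos (h.dvd e he) (Nat.pos_of_ne_zero h.ne_zero)

lemma IsExactDivisorGroup.finite (h : IsExactDivisorGroup N S) : S.Finite :=
  (Set.finite_Iic N).subset fun e he => Nat.le_of_dvd (Nat.pos_of_ne_zero h.ne_zero) (h.dvd e he)

/-- The determinant condition in the definition of `W_N(e)` is automatic. -/
lemma mem_GammaPlus (hS : IsExactDivisorGroup N S) {g : SL(2, ℝ)} {e : ℕ} (he : e ∈ S)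
    {a b c d : ℤ} (h00 : √e * g 0 0 = a * e) (h01 : √e * g 0 1 = b) (h10 : √e * g 1 0 = c * N)
    (h11 : √e * g 1 1 = d * e) : g ∈ GammaPlus N S := by
  have he0 : (0 : ℝ) < e := by exact_mod_cast hS.pos he
  have hs : √(e : ℝ) ≠ 0 := (Real.sqrt_pos.mpr he0).ne'
  refine ⟨e, he, a, b, c, d, ?_, ?_⟩
  · obtain ⟨m, hm⟩ := hS.dvd e he
    have hdiv : N / e = m := by rw [hm, Nat.mul_div_cancel_left _ (hS.pos he)]
    have hdet := g.det_coe
    rw [Matrix.det_fin_two] at hdet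
    have hss : √(e : ℝ) * √e = e := Real.mul_self_sqrt he0.le
    have hNm : (N : ℝ) = e * m := by exact_mod_cast hm
    rw [hNm] at h10
    have : (a : ℝ) * d * e - b * c * m = 1 := by
      apply mul_left_cancel₀ he0.ne'
      have hmul : (a * e : ℝ) * (d * e) - b * (c * (e * m)) = e := by
        rw [← h00, ← h11, ← h01, ← h10]
        linear_combination (√(e : ℝ) * √e) * hdet + hss
      linear_combination hmul
    rw [hdiv]
    exact_mod_cast this
  · ext i j
    fin_cases i <;> fin_cases j <;> simp <;> field_simp <;> rw [mul_comm] <;> assumption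

lemma exists_of_mem_GammaPlus (hS : IsExactDivisorGroup N S) {g : SL(2, ℝ)}
    (hg : g ∈ GammaPlus N S) : ∃ e ∈ S, ∃ a b c d : ℤ,
      a * d * (e : ℤ) - b * c * ((N / e : ℕ) : ℤ) = 1 ∧ √e * g 0 0 = a * e ∧ √e * g 0 1 = b ∧
      √e * g 1 0 = c * N ∧ √e * g 1 1 = d * e := by
  obtain ⟨e, he, a, b, c, d, hdet, h⟩ := hg
  have he0 : (0 : ℝ) < e := by exact_mod_cast hS.pos he
  have hs : √(e : ℝ) ≠ 0 := (Real.sqrt_pos.mpr he0).ne'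
  refine ⟨e, he, a, b, c, d, hdet, ?_⟩
  have h00 := congrFun (congrFun h 0) 0
  have h01 := congrFun (congrFun h 0) 1
  have h10 := congrFun (congrFun h 1) 0
  have h11 := congrFun (congrFun h 1) 1
  simp only [Matrix.smul_apply, Matrix.of_apply, Matrix.cons_val', Matrix.cons_val_zero,
    Matrix.cons_val_one, Matrix.cons_val_fin_one, smul_eq_mul] at h00 h01 h10 h11
  rw [h00, h01, h10, h11]
  refine ⟨?_, ?_, ?_, ?_⟩ <;> field_simp

/-- `Γ₀(N)+S` as a subgroup of `SL₂(ℝ)`. -/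
def gammaPlus (hS : IsExactDivisorGroup N S) : Subgroup SL(2, ℝ) where
  carrier := GammaPlus N S
  one_mem' := mem_GammaPlus hS hS.one_mem (a := 1) (b := 0) (c := 0) (d := 1)
    (by simp) (by simp) (by simp) (by simp)
  mul_mem' := by
    intro g h hg hh
    obtain ⟨e, he, a, b, c, d, -, h00, h01, h10, h11⟩ := exists_of_mem_GammaPlus hS hg
    obtain ⟨f, hf, a', b', c', d', -, k00, k01, k10, k11⟩ := exists_of_mem_GammaPlus hS hh
    obtain ⟨m, hm⟩ := Nat.lcm_dvd (hS.dvd e he) (hS.dvd f hf)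
    have hmul := hS.mul_mem e he f hf
    obtain ⟨e₁, f₁, -, he₁, hf₁⟩ := Nat.exists_coprime e f
    have hg0 : 0 < e.gcd f := Nat.gcd_pos_of_pos_left _ (hS.pos he)
    have hlcm := Nat.gcd_mul_lcm e f
    generalize e.gcd f = r at *
    have hdiv : e * f / r ^ 2 = e₁ * f₁ := by
      rw [he₁, hf₁]
      exact Nat.div_eq_of_eq_mul_left (by positivity) (by ring)
    have hNm : N = r * e₁ * f₁ * m := by
      rw [hm]
      congr 1
      apply Nat.eq_of_mul_eq_mul_left hg0
      rw [hlcm, he₁, hf₁]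
      ring
    rw [hdiv] at hmul
    have hr : (0 : ℝ) < r := by exact_mod_cast hg0
    have heR : (e : ℝ) = e₁ * r := by exact_mod_cast he₁
    have hfR : (f : ℝ) = f₁ * r := by exact_mod_cast hf₁
    have hNR : (N : ℝ) = r * e₁ * f₁ * m := by exact_mod_cast hNm
    have hsq : √(e : ℝ) * √f = r * √((e₁ * f₁ : ℕ) : ℝ) := by
      rw [← Real.sqrt_mul (by positivity), ← Real.sqrt_sq hr.le, ← Real.sqrt_mul (by positivity),
        heR, hfR]
      push_cast
      ring_nf
    refine mem_GammaPlus hS hmul (a := a * a' * r + b * c' * m) (b := a * e₁ * b' + b * d' * f₁)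
      (c := c * a' * f₁ + d * e₁ * c') (d := c * b' * m + d * d' * r) ?_ ?_ ?_ ?_ <;>
    · apply mul_left_cancel₀ hr.ne'
      rw [← mul_assoc, ← hsq, Matrix.SpecialLinearGroup.coe_mul, Matrix.mul_apply,
        Fin.sum_univ_two, show ∀ s t x y z w : ℝ, s * t * (x * y + z * w) =
          s * x * (t * y) + s * z * (t * w) by intros; ring]
      simp only [h00, h01, h10, h11, k00, k01, k10, k11]
      push_cast
      simp only [heR, hfR, hNR]
      ring
  inv_mem' := by
    intro g hg
    obtain ⟨e, he, a, b, c, d, -, h00, h01, h10, h11⟩ := exists_of_mem_GammaPlus hS hg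
    refine mem_GammaPlus hS he (a := d) (b := -b) (c := -c) (d := a) ?_ ?_ ?_ ?_ <;>
      simp [Matrix.SpecialLinearGroup.coe_inv, Matrix.adjugate_fin_two, *]

lemma isClosed_GammaPlus (hS : IsExactDivisorGroup N S) : IsClosed (GammaPlus N S) := by
  have hclosed : ∀ x : ℝ, x ≠ 0 → IsClosed {y : ℝ | ∃ n : ℤ, y = n * x} := by
    intro x hx
    have : {y : ℝ | ∃ n : ℤ, y = n * x} = (fun y => y / x) ⁻¹' range ((↑) : ℤ → ℝ) := by
      ext y
      simp only [mem_ofPred_eq, mem_preimage, mem_range]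
      exact exists_congr fun n => by rw [eq_comm, eq_div_iff hx]
    rw [this]
    exact Int.isClosedEmbedding_coe_real.isClosed_range.preimage (by fun_prop)
  have : GammaPlus N S = ⋃ e ∈ S, {g : SL(2, ℝ) | (∃ a : ℤ, √e * g 0 0 = a * e) ∧
      (∃ b : ℤ, √e * g 0 1 = b * 1) ∧ (∃ c : ℤ, √e * g 1 0 = c * N) ∧
      (∃ d : ℤ, √e * g 1 1 = d * e)} := by
    ext g
    simp only [mem_iUnion, mem_ofPred_eq, exists_prop]
    constructor
    · intro hg
      obtain ⟨e, he, a, b, c, d, -, h00, h01, h10, h11⟩ := exists_of_mem_GammaPlus hS hg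
      exact ⟨e, he, ⟨a, h00⟩, ⟨b, by rw [h01, mul_one]⟩, ⟨c, h10⟩, ⟨d, h11⟩⟩
    · rintro ⟨e, he, ⟨a, h00⟩, ⟨b, h01⟩, ⟨c, h10⟩, ⟨d, h11⟩⟩
      exact mem_GammaPlus hS he h00 (by rw [h01, mul_one]) h10 h11
  rw [this]
  refine hS.finite.isClosed_biUnion fun e he => ?_
  have he0 : (e : ℝ) ≠ 0 := by exact_mod_cast (hS.pos he).ne'
  have hN : (N : ℝ) ≠ 0 := by exact_mod_cast hS.ne_zero
  have hc : ∀ i j : Fin 2, Continuous fun g : SL(2, ℝ) => √(e : ℝ) * g i j := fun i j =>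
    continuous_const.mul ((continuous_id.matrix_elem i j).comp continuous_subtype_val)
  exact ((hclosed _ he0).preimage (hc 0 0)).inter (((hclosed 1 one_ne_zero).preimage (hc 0 1)).inter
    (((hclosed _ hN).preimage (hc 1 0)).inter ((hclosed _ he0).preimage (hc 1 1))))

end GroupStructure

/-! ### Invariance under `Γ₀(N)+S` -/

section Invariance

variable {N : ℕ} {P : List (ℕ × ℤ)}

lemma coe_smul_int (g : SL(2, ℤ)) (τ : ℍ) :
    ((g • τ : ℍ) : ℂ) = (g 0 0 * τ + g 0 1) / (g 1 0 * τ + g 1 1) := by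
  rw [UpperHalfPlane.coe_specialLinearGroup_apply]; simp

lemma det_int (g : SL(2, ℤ)) : g 0 0 * g 1 1 - g 0 1 * g 1 0 = 1 := by
  rw [← Matrix.det_fin_two, g.det_coe]

lemma mdifferentiable_comp_smul_real {T : ℍ → ℂ} (hT : MDifferentiable 𝓘(ℂ) 𝓘(ℂ) T) (g : SL(2, ℝ)) :
    MDifferentiable 𝓘(ℂ) 𝓘(ℂ) fun τ : ℍ => T (g • τ) :=
  hT.comp (mdifferentiable_smul (g := Matrix.SpecialLinearGroup.mapGL ℝ g) (by simp))

lemma mdifferentiable_comp_smul_int {T : ℍ → ℂ} (hT : MDifferentiable 𝓘(ℂ) 𝓘(ℂ) T) (g : SL(2, ℤ)) :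
    MDifferentiable 𝓘(ℂ) 𝓘(ℂ) fun τ : ℍ => T (g • τ) :=
  hT.comp (mdifferentiable_smul (g := Matrix.SpecialLinearGroup.mapGL ℝ g) (by simp))

/-- A nowhere vanishing holomorphic function whose modulus is invariant under `w` is an
eigenfunction of `w`. -/
lemma exists_eq_mul_of_norm_eq {T : ℍ → ℂ} (hT : MDifferentiable 𝓘(ℂ) 𝓘(ℂ) T)
    (hne : ∀ τ, T τ ≠ 0) (w : SL(2, ℝ)) (h : ∀ τ : ℍ, ‖T (w • τ)‖ = ‖T τ‖) :
    ∃ χ : ℂ, ∀ τ : ℍ, T (w • τ) = χ * T τ := by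
  have hd : MDifferentiable 𝓘(ℂ) 𝓘(ℂ) fun τ : ℍ => T (w • τ) / T τ := by
    have h1 := mdifferentiable_comp_smul_real hT w
    rw [UpperHalfPlane.mdifferentiable_iff] at h1 hT ⊢
    exact h1.div hT fun x _ => hne _
  by_contra hχ
  have hopen := isOpenMap_of_not_const hd (by
    rintro ⟨c, hc⟩
    exact hχ ⟨c, fun τ => by rw [← hc τ, div_mul_cancel₀ _ (hne τ)]⟩)
  have h1 : IsOpen (range fun τ : ℍ => T (w • τ) / T τ) := hopen.isOpen_range
  have h2 : (range fun τ : ℍ => T (w • τ) / T τ) ⊆ Metric.sphere 0 1 := by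
    rintro _ ⟨τ, rfl⟩
    simp [h τ, hne τ]
  have h3 := interior_maximal h2 h1
  rw [interior_sphere' ] at h3
  exact h3 (mem_range_self I)

lemma exists_smul_eq_self {w : SL(2, ℝ)} (h : w 1 1 = -w 0 0) (hpos : 0 < w 1 0) :
    ∃ τ : ℍ, w • τ = τ := by
  have hdet := w.det_coe
  rw [Matrix.det_fin_two, h] at hdet
  have hc : ((w 1 0 : ℝ) : ℂ) ≠ 0 := by exact_mod_cast hpos.ne'
  refine ⟨⟨(w 0 0 + Complex.I) / w 1 0, ?_⟩, ?_⟩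
  · rw [Complex.div_ofReal_im]
    simp [hpos]
  · ext
    rw [coe_smul_eq, h]
    have hdetC : (w 0 0 : ℂ) * (-w 0 0) - w 0 1 * w 1 0 = 1 := by exact_mod_cast hdet
    simp only
    push_cast
    rw [mul_div_cancel₀ _ hc, add_neg_cancel_comm, div_eq_div_iff Complex.I_ne_zero hc]
    field_simp
    linear_combination -hdetC + (-1 : ℂ) * Complex.I_sq

/-- The function `1/η_π` on the upper half-plane. -/
def etaInv (P : List (ℕ × ℤ)) : ℍ → ℂ := fun τ => (etaFrame P τ)⁻¹

lemma etaInv_smul_of_int (hP : IsLevel N P) {g : SL(2, ℝ)} {a b c d : ℤ} (h00 : g 0 0 = a)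
    (h01 : g 0 1 = b) (h10 : g 1 0 = c * N) (h11 : g 1 1 = d) (τ : ℍ) :
    etaInv P (g • τ) = etaInv P τ := by
  have hdet := g.det_coe
  rw [Matrix.det_fin_two, h00, h01, h10, h11] at hdet
  have hdet : a * d - b * (c * N) = 1 := by exact_mod_cast hdet
  rw [etaInv, etaInv, coe_smul_eq, h00, h01, h10, h11, ← etaFrame_smul hP hdet τ.im_pos]
  push_cast
  rfl

/-- Invariance of `1/η_π` under `w` in `W_N(e)` gives invariance under all of `W_N(e)`. -/
lemma etaInv_smul_of_eigen (hP : IsLevel N P) {e : ℕ} (he : e ∣ N) (he0 : 0 < e)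
    {g w : SL(2, ℝ)}
    {a b c d : ℤ} (h00 : √e * g 0 0 = a * e) (h01 : √e * g 0 1 = b) (h10 : √e * g 1 0 = c * N)
    (h11 : √e * g 1 1 = d * e)
    {a' b' c' d' : ℤ} (k00 : √e * w 0 0 = a' * e) (k01 : √e * w 0 1 = b')
    (k10 : √e * w 1 0 = c' * N) (k11 : √e * w 1 1 = d' * e)
    (hw : ∀ τ : ℍ, etaInv P (w • τ) = etaInv P τ) (τ : ℍ) :
    etaInv P (g • τ) = etaInv P τ := by
  obtain ⟨m, hm⟩ := he
  have hmR : (N : ℝ) = e * m := by exact_mod_cast hm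
  have heR : (0 : ℝ) < e := by exact_mod_cast he0
  have hss : √(e : ℝ) * √e = e := Real.mul_self_sqrt heR.le
  have h := etaInv_smul_of_int hP (g := g * w⁻¹) (a := a * d' * e - b * c' * m)
    (b := b * a' - a * b') (c := c * d' - d * c') (d := d * a' * e - c * b' * m)
    ?_ ?_ ?_ ?_ (w • τ)
  · rw [mul_smul, inv_smul_smul] at h
    rw [h, hw]
  all_goals
    apply mul_left_cancel₀ heR.ne'
    rw [Matrix.SpecialLinearGroup.coe_mul, Matrix.mul_apply, Fin.sum_univ_two,
      Matrix.SpecialLinearGroup.SL2_inv_expl, ← hss, show ∀ s x y z w : ℝ,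
        s * s * (x * y + z * w) = s * x * (s * y) + s * z * (s * w) by intros; ring]
    simp [h00, h01, h10, h11, k00, k01, k10, k11, hss, hmR]
    ring

lemma coe_smul_of_sqrt {e : ℕ} (he0 : 0 < e) {g : SL(2, ℝ)} {a b c d : ℤ}
    (h00 : √e * g 0 0 = a * e) (h01 : √e * g 0 1 = b)
    (h10 : √e * g 1 0 = c * N) (h11 : √e * g 1 1 = d * e) (τ : ℍ) :
    ((g • τ : ℍ) : ℂ) = (a * e * τ + b) / (c * N * τ + d * e) := by
  have hs : ((√(e : ℝ) : ℝ) : ℂ) ≠ 0 := by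
    have : 0 < √(e : ℝ) := Real.sqrt_pos.mpr (by exact_mod_cast he0)
    exact_mod_cast this.ne'
  have h00 : ((√(e : ℝ) : ℝ) : ℂ) * g 0 0 = a * e := by exact_mod_cast h00
  have h01 : ((√(e : ℝ) : ℝ) : ℂ) * g 0 1 = b := by exact_mod_cast h01
  have h10 : ((√(e : ℝ) : ℝ) : ℂ) * g 1 0 = c * N := by exact_mod_cast h10
  have h11 : ((√(e : ℝ) : ℝ) : ℂ) * g 1 1 = d * e := by exact_mod_cast h11
  rw [coe_smul_eq, ← mul_div_mul_left _ _ hs, mul_add, mul_add, ← mul_assoc, ← mul_assoc, h00, h01,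
    h10, h11]

end Invariance

section AtkinLehner

variable {N : ℕ} {P : List (ℕ × ℤ)}

/-- The matrix `g` is `(1/√e)[[ae, b],[cN, de]]`. -/
structure IsAtkinLehner (N e : ℕ) (a b c d : ℤ) (g : SL(2, ℝ)) : Prop where
  h00 : √e * g 0 0 = a * e
  h01 : √e * g 0 1 = b
  h10 : √e * g 1 0 = c * N
  h11 : √e * g 1 1 = d * e

lemma exists_isAtkinLehner {e : ℕ} (he : e ∣ N) (he0 : 0 < e) {a b c d : ℤ}
    (hdet : a * d * e - b * c * ((N / e : ℕ) : ℤ) = 1) :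
    ∃ g : SL(2, ℝ), IsAtkinLehner N e a b c d g := by
  obtain ⟨m, rfl⟩ := he
  rw [Nat.mul_div_cancel_left _ he0] at hdet
  have heR : (0 : ℝ) < e := by exact_mod_cast he0
  have hs : √(e : ℝ) ≠ 0 := (Real.sqrt_pos.mpr heR).ne'
  have hss : √(e : ℝ) ^ 2 = e := Real.sq_sqrt heR.le
  have hdetR : (a : ℝ) * d * e - b * c * m = 1 := by exact_mod_cast hdet
  refine ⟨⟨(√(e : ℝ))⁻¹ • !![(a : ℝ) * e, (b : ℝ); (c : ℝ) * (e * m : ℕ), (d : ℝ) * e], ?_⟩,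
    ?_, ?_, ?_, ?_⟩
  · rw [Matrix.det_smul, Fintype.card_fin, inv_pow, hss, Matrix.det_fin_two_of]
    push_cast
    field_simp
    linear_combination hdetR
  all_goals simp [mul_inv_cancel_left₀ hs]

lemma exists_eq_mul_of_isAtkinLehner (hP : IsLevel N P) {e : ℕ} (he : e ∣ N) (he0 : 0 < e)
    (hperm : (P.map fun p => (p.1 * e / (p.1.gcd e) ^ 2, p.2)).Perm P) {a b c d : ℤ}
    (hdet : a * d * e - b * c * ((N / e : ℕ) : ℤ) = 1) {w : SL(2, ℝ)}
    (hw : IsAtkinLehner N e a b c d w) :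
    ∃ χ : ℂ, ∀ τ : ℍ, etaInv P (w • τ) = χ * etaInv P τ := by
  refine exists_eq_mul_of_norm_eq (mdifferentiable_etaFrame_inv hP.pos)
    (fun τ => inv_ne_zero (etaFrame_ne_zero hP.pos τ.im_pos)) w fun τ => ?_
  rw [norm_inv, coe_smul_of_sqrt he0 hw.h00 hw.h01 hw.h10 hw.h11 τ,
    norm_etaFrame_atkinLehner hP.pos hP.dvd hP.weight he he0 hperm hdet τ.im_pos, ← norm_inv]

/-- `1/η_π` is invariant under the Atkin-Lehner coset `W_N(e)`. -/
def IsInvariant (N e : ℕ) (P : List (ℕ × ℤ)) : Prop :=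
  ∃ (a b c d : ℤ) (w : SL(2, ℝ)), IsAtkinLehner N e a b c d w ∧
    ∀ τ : ℍ, etaInv P (w • τ) = etaInv P τ

lemma isInvariant_one (N : ℕ) (P : List (ℕ × ℤ)) : IsInvariant N 1 P :=
  ⟨1, 0, 0, 1, 1, ⟨by simp, by simp, by simp, by simp⟩, by simp⟩

/-- An elliptic involution in `W_N(e)` has a fixed point, so its multiplier is trivial. -/
lemma exists_invariant_of_trace_eq_zero (hP : IsLevel N P) {e : ℕ} (he : e ∣ N) (he0 : 0 < e)
    (hN : 0 < N) (hperm : (P.map fun p => (p.1 * e / (p.1.gcd e) ^ 2, p.2)).Perm P) {a b c : ℤ}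
    (hc : 0 < c) (hdet : a * (-a) * e - b * c * ((N / e : ℕ) : ℤ) = 1) :
    ∃ w : SL(2, ℝ), IsAtkinLehner N e a b c (-a) w ∧ ∀ τ : ℍ, etaInv P (w • τ) = etaInv P τ := by
  obtain ⟨w, hw⟩ := exists_isAtkinLehner he he0 hdet
  obtain ⟨χ, hχ⟩ := exists_eq_mul_of_isAtkinLehner hP he he0 hperm hdet hw
  have hs : 0 < √(e : ℝ) := Real.sqrt_pos.mpr (by exact_mod_cast he0)
  obtain ⟨τ, hτ⟩ := exists_smul_eq_self (w := w)
    (mul_left_cancel₀ hs.ne' (by rw [hw.h11, mul_neg, hw.h00]; push_cast; ring))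
    (pos_of_mul_pos_right (a := √(e : ℝ)) (by rw [hw.h10]; positivity) hs.le)
  refine ⟨w, hw, ?_⟩
  have h := hχ τ
  rw [hτ] at h
  have : χ = 1 := (mul_eq_right₀ (inv_ne_zero (etaFrame_ne_zero hP.pos τ.im_pos))).mp h.symm
  simpa [this] using hχ

lemma etaInv_smul_of_mem (hP : IsLevel N P) {S : Set ℕ} (hS : IsExactDivisorGroup N S)
    (hinv : ∀ e ∈ S, IsInvariant N e P) {g : SL(2, ℝ)} (hg : g ∈ GammaPlus N S) (τ : ℍ) :
    etaInv P (g • τ) = etaInv P τ := by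
  obtain ⟨e, he, a, b, c, d, -, h00, h01, h10, h11⟩ := exists_of_mem_GammaPlus hS hg
  obtain ⟨a', b', c', d', w, hw, h⟩ := hinv e he
  exact etaInv_smul_of_eigen hP (hS.dvd e he) (hS.pos he) h00 h01 h10 h11 hw.h00 hw.h01 hw.h10
    hw.h11 h τ

lemma isInvariant_half {n : ℕ} (hP : IsLevel (2 * n) P) (hn : Odd n)
    (hperm : (P.map fun p => (p.1 * n / (p.1.gcd n) ^ 2, p.2)).Perm P) :
    IsInvariant (2 * n) n P := by
  obtain ⟨k, rfl⟩ := hn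
  refine ⟨_, _, _, _, exists_invariant_of_trace_eq_zero hP (Dvd.intro_left 2 rfl) (by lia) (by lia)
    hperm (a := 1) (b := -1) (c := k + 1) (by lia) ?_⟩
  rw [Nat.mul_div_cancel _ (by lia)]
  push_cast
  ring

lemma isInvariant_thirty (hP : IsLevel 30 P) {e : ℕ}
    (h6 : (P.map fun p => (p.1 * 6 / (p.1.gcd 6) ^ 2, p.2)).Perm P)
    (h15 : (P.map fun p => (p.1 * 15 / (p.1.gcd 15) ^ 2, p.2)).Perm P)
    (he : e ∈ ({1, 6, 10, 15} : Set ℕ)) : IsInvariant 30 e P := by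
  obtain ⟨w, hw, h⟩ := exists_invariant_of_trace_eq_zero hP (e := 6) (by norm_num) (by norm_num)
    (by norm_num) h6 (a := 2) (b := -5) (c := 1) (by norm_num) (by norm_num)
  obtain ⟨v, hv, k⟩ := exists_invariant_of_trace_eq_zero hP (e := 15) (by norm_num) (by norm_num)
    (by norm_num) h15 (a := 1) (b := -8) (c := 1) (by norm_num) (by norm_num)
  rcases he with rfl | rfl | rfl | rfl
  · exact isInvariant_one _ _
  · exact ⟨_, _, _, _, w, hw, h⟩
  swap
  · exact ⟨_, _, _, _, v, hv, k⟩
  refine ⟨1, -7, 1, -2, w * v, ?_, fun τ => by rw [mul_smul, h, k]⟩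
  have hs : √(10 : ℝ) = √6 * √15 / 3 := by
    rw [← Real.sqrt_mul (by norm_num), show (6 * 15 : ℝ) = 10 * 3 ^ 2 by norm_num,
      Real.sqrt_mul (by norm_num), Real.sqrt_sq (by norm_num)]
    ring
  obtain ⟨h00, h01, h10, h11⟩ := hw
  obtain ⟨k00, k01, k10, k11⟩ := hv
  push_cast at *
  constructor
  all_goals
    push_cast
    rw [hs, Matrix.SpecialLinearGroup.coe_mul, Matrix.mul_apply, Fin.sum_univ_two,
      show ∀ s t x y z w : ℝ, s * t / 3 * (x * y + z * w) =
        (s * x * (t * y) + s * z * (t * w)) / 3 by intros; ring]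
    simp only [h00, h01, h10, h11, k00, k01, k10, k11]
    norm_num

lemma denom_int_ne_zero (g : SL(2, ℤ)) (z : ℍ) : (g 1 0 * z + g 1 1 : ℂ) ≠ 0 := by
  have h := denom_ne_zero (Matrix.SpecialLinearGroup.mapGL ℝ g) z
  simpa [denom] using h

/-- `24N` times the order of `η_π` at the cusp `a/c` of `Γ₀(N)`, up to the width. -/
def cuspOrder (N : ℕ) (P : List (ℕ × ℤ)) (c : ℕ) : ℤ :=
  (P.map fun p => p.2 * ((c.gcd p.1 ^ 2 * (N / p.1) : ℕ) : ℤ)).sum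

lemma mul_sum_eq_cuspOrder (hP : IsLevel N P) (c : ℤ) :
    (N : ℝ) * (P.map fun p => p.2 * ((c.gcd p.1 : ℝ) ^ 2 / p.1)).sum =
      cuspOrder N P (c.gcd N) := by
  rw [cuspOrder, ← List.sum_map_mul_left, Int.cast_list_sum, List.map_map]
  congr 1
  refine List.map_congr_left fun p hp => ?_
  obtain ⟨m, hm⟩ := hP.dvd p hp
  have h0 := hP.pos p hp
  have hg : (c.gcd N).gcd p.1 = c.gcd p.1 := by
    rw [Int.gcd_eq_natAbs, Int.gcd_eq_natAbs, Nat.gcd_assoc, Int.natAbs_natCast,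
      Int.natAbs_natCast, Nat.gcd_eq_right (hP.dvd p hp)]
  have hR : (N : ℝ) = p.1 * m := by exact_mod_cast hm
  have h0R : (p.1 : ℝ) ≠ 0 := by exact_mod_cast h0.ne'
  have hdiv : N / p.1 = m := by rw [hm, Nat.mul_div_cancel_left _ h0]
  simp only [Function.comp_apply, hg, hdiv]
  push_cast
  rw [hR]
  field_simp

lemma exists_tendsto_etaInv_smul (hP : IsLevel N P) (hN : N ≠ 0) (g : SL(2, ℤ))
    (hg : cuspOrder N P ((g 1 0).gcd N) ≤ 0) :
    ∃ t : ℂ, Tendsto (fun z : ℍ => etaInv P (g • z)) atImInfty (𝓝 t) := by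
  have hN0 : (0 : ℝ) < N := by exact_mod_cast Nat.pos_of_ne_zero hN
  have hdet := det_int g
  refine exists_tendsto_of_periodic hN0 (fun z => ?_)
    (mdifferentiable_comp_smul_int (mdifferentiable_etaFrame_inv hP.pos) g) ?_
  · have hdet' : (1 - g 0 0 * g 1 0 * N) * (1 + g 0 0 * g 1 0 * N) -
        g 0 0 ^ 2 * N * (-g 1 0 ^ 2 * N) = 1 := by ring
    simp only [etaInv]
    rw [← etaFrame_smul hP hdet' (g • z).im_pos]
    congr 2
    have h1 := denom_int_ne_zero g z
    have h2 := denom_int_ne_zero g ((N : ℝ) +ᵥ z)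
    have hdetC : (g 0 0 * g 1 1 - g 0 1 * g 1 0 : ℂ) = 1 := by exact_mod_cast hdet
    rw [coe_smul_int, coe_smul_int]
    rw [coe_vadd, Complex.ofReal_natCast] at h2 ⊢
    push_cast
    generalize (g 0 0 : ℂ) = a at *
    generalize (g 0 1 : ℂ) = b at *
    generalize (g 1 0 : ℂ) = c at *
    generalize (g 1 1 : ℂ) = d at *
    have h3 : -c ^ 2 * N * ((a * z + b) / (c * z + d)) + (1 + a * c * N) =
        (c * (N + z) + d) / (c * z + d) := by
      field_simp
      linear_combination c * N * hdetC
    have h4 : (1 - a * c * N) * ((a * z + b) / (c * z + d)) + a ^ 2 * N =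
        (a * (N + z) + b) / (c * z + d) := by
      field_simp
      linear_combination a * N * hdetC
    rw [h3, h4, div_div_div_cancel_right₀ h1]
  · have h := isBigO_etaFrame_inv_cusp hdet hP.pos hP.weight (P := P) ?_
    · convert h using 3 with z
      exact congrArg (fun w => (etaFrame P w)⁻¹) (coe_smul_int g z)
    · have := mul_sum_eq_cuspOrder hP (g 1 0)
      by_contra! h
      have h3 := mul_pos hN0 h
      rw [this] at h3
      have : 0 < cuspOrder N P ((g 1 0).gcd N) := by exact_mod_cast h3
      lia

/-- A nonzero value at a cusp fixed by a parabolic element of `W_N(e)` forces a trivial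
multiplier. -/
lemma isInvariant_twelve_four (hP : IsLevel 12 P)
    (hperm : (P.map fun p => (p.1 * 4 / (p.1.gcd 4) ^ 2, p.2)).Perm P)
    (h0 : cuspOrder 12 P 2 = 0) :
    IsInvariant 12 4 P := by
  obtain ⟨w, hw⟩ := exists_isAtkinLehner (N := 12) (e := 4) (a := 2) (b := -3) (c := 1) (d := -1)
    (by norm_num) (by norm_num) (by norm_num)
  obtain ⟨χ, hχ⟩ := exists_eq_mul_of_isAtkinLehner hP (by norm_num) (by norm_num) hperm
    (by norm_num) hw
  refine ⟨_, _, _, _, w, hw, ?_⟩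
  let γ : SL(2, ℤ) := ⟨!![1, 0; 2, 1], by simp⟩
  have hγ : (γ 1 0).gcd (12 : ℕ) = 2 := by decide
  obtain ⟨L, hL⟩ := exists_tendsto_etaInv_smul hP (by norm_num) γ (by rw [hγ, h0])
  have hL0 : L ≠ 0 := by
    obtain ⟨C, hC, h⟩ := tendsto_norm_etaFrame_cusp (det_int γ) hP.pos hP.weight
    have hsum := mul_sum_eq_cuspOrder hP (γ 1 0)
    rw [hγ, h0, Int.cast_zero, mul_eq_zero] at hsum
    rw [hsum.resolve_left (by norm_num)] at h
    rintro rfl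
    have h1 := ((hL.norm.pow 4).mul h)
    rw [norm_zero, zero_pow (by norm_num), zero_mul] at h1
    refine one_ne_zero (tendsto_nhds_unique (tendsto_const_nhds (x := (1 : ℝ))) (h1.congr ?_))
    intro z
    have := norm_ne_zero_iff.mpr (etaFrame_ne_zero hP.pos (γ • z).im_pos)
    rw [etaInv, norm_inv, ← coe_smul_int, mul_zero, Real.exp_zero, mul_one, ← mul_pow,
      inv_mul_cancel₀ this, one_pow]
  have htrans : ∀ z : ℍ, etaInv P (γ • ((-3 / 2 : ℝ) +ᵥ z)) = χ * etaInv P (γ • z) := by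
    intro z
    rw [← hχ]
    congr 1
    ext
    rw [coe_smul_of_sqrt (by norm_num) hw.h00 hw.h01 hw.h10 hw.h11, coe_smul_int, coe_smul_int]
    have h1 := denom_int_ne_zero γ z
    simp only [γ, coe_vadd, Matrix.of_apply, Matrix.cons_val', Matrix.cons_val_zero,
      Matrix.cons_val_one, Matrix.cons_val_fin_one] at h1 ⊢
    push_cast at h1 ⊢
    have h3 : (1 : ℂ) * 12 * ((1 * z + 0) / (2 * z + 1)) + -1 * 4 =
        2 * (2 * (-3 / 2 + z) + 1) / (2 * z + 1) := by
      rw [mul_div_assoc', div_add' _ _ _ h1]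
      congr 1
      ring
    have h4 : (2 : ℂ) * 4 * ((1 * z + 0) / (2 * z + 1)) + -3 =
        2 * (1 * (-3 / 2 + z) + 0) / (2 * z + 1) := by
      rw [mul_div_assoc', div_add' _ _ _ h1]
      congr 1
      ring
    rw [h3, h4, div_div_div_cancel_right₀ h1, mul_div_mul_left _ _ two_ne_zero]
  have hshift : Tendsto (fun z : ℍ => (-3 / 2 : ℝ) +ᵥ z) atImInfty atImInfty := by
    rw [atImInfty, tendsto_comap_iff]
    exact tendsto_comap.congr fun z => by simp
  have h1 := (hL.comp hshift).congr htrans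
  have h2 := tendsto_nhds_unique h1 (hL.const_mul χ)
  have : χ = 1 := (mul_eq_right₀ hL0).mp h2.symm
  simpa [this] using hχ

end AtkinLehner

/-! ### `1/η_π` is a principal modulus -/

section PrincipalModulus

variable {N : ℕ} {P : List (ℕ × ℤ)} {S : Set ℕ}

lemma mem_gammaPlus_of_isAtkinLehner (hS : IsExactDivisorGroup N S) {e : ℕ} (he : e ∈ S)
    {a b c d : ℤ} {g : SL(2, ℝ)} (hg : IsAtkinLehner N e a b c d g) : g ∈ gammaPlus hS :=
  mem_GammaPlus hS he hg.h00 hg.h01 hg.h10 hg.h11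

/-- An integral matrix carries `i∞` to a cusp equivalent to `i∞` under `W_N(e)` if the greatest
common divisor of its lower left entry with `N` is `N / e`. -/
lemma exists_smul_eq_smul_of_gcd_mul_eq (hS : IsExactDivisorGroup N S) {e : ℕ} (he : e ∈ S)
    (g : SL(2, ℤ)) (hg : (g 1 0).gcd N * e = N) :
    ∃ u : ℍ → ℍ, Tendsto u atImInfty atImInfty ∧ ∀ z, ∃ γ ∈ gammaPlus hS, γ • u z = g • z := by
  have he0 := hS.pos he
  have hdet := det_int g
  have hdiv : N / e = (g 1 0).gcd N := by
    conv_lhs => rw [← hg]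
    exact Nat.mul_div_cancel _ he0
  have hco := hS.coprime e he
  rw [hdiv] at hco
  obtain ⟨c', hc'⟩ := Int.gcd_dvd_left (g 1 0) (N : ℤ)
  have hm0 : (g 1 0).gcd N ≠ 0 := fun h => hS.ne_zero (by rw [← hg, h, zero_mul])
  have hc'e : IsCoprime c' (e : ℤ) := by
    rw [Int.isCoprime_iff_gcd_eq_one]
    have h1 := Int.gcd_mul_left ((g 1 0).gcd N : ℕ) c' e
    rw [← hc', ← Nat.cast_mul, hg, Int.natAbs_natCast] at h1
    exact (Nat.eq_of_mul_eq_mul_left (Nat.pos_of_ne_zero hm0) (by rw [mul_one]; exact h1)).symm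
  have hcop : IsCoprime (g 0 0 * e) (g 1 0) := by
    refine IsCoprime.mul_left ⟨g 1 1, -g 0 1, by linear_combination hdet⟩ ?_
    rw [hc']
    exact IsCoprime.mul_right (Nat.isCoprime_iff_coprime.mpr hco) hc'e.symm
  obtain ⟨x, y, hxy⟩ := hcop
  obtain ⟨γ, hγ⟩ := exists_isAtkinLehner (N := N) (a := g 0 0) (b := -y) (c := c') (d := x)
    (hS.dvd e he) he0 (by rw [hdiv]; linear_combination hxy - y * hc')
  have heR : (0 : ℝ) < e := by exact_mod_cast he0
  have heC : (e : ℂ) ≠ 0 := by exact_mod_cast he0.ne'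
  let t : ℤ := x * e * g 0 1 + y * g 1 1
  have hpos : ∀ z : ℍ, 0 < ((z + t) / (e : ℝ) : ℂ).im := fun z => by
    rw [Complex.div_ofReal_im]
    have := z.im_pos
    simp only [Complex.add_im, Complex.intCast_im, add_zero]
    exact div_pos this heR
  refine ⟨fun z => ⟨(z + t) / (e : ℝ), hpos z⟩, ?_, fun z =>
    ⟨γ, mem_gammaPlus_of_isAtkinLehner hS he hγ, ?_⟩⟩
  · rw [atImInfty, tendsto_comap_iff]
    refine (tendsto_comap.atTop_div_const heR).congr fun z => ?_
    simp only [Function.comp_apply, UpperHalfPlane.im]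
    rw [Complex.div_ofReal_im]
    simp
  · ext
    rw [coe_smul_of_sqrt he0 hγ.h00 hγ.h01 hγ.h10 hγ.h11, coe_smul_int]
    have hNC : (N : ℂ) = ((g 1 0).gcd N : ℕ) * e := by exact_mod_cast hg.symm
    have hcC : (g 1 0 : ℂ) = ((g 1 0).gcd N : ℕ) * c' := by exact_mod_cast hc'
    have hdetC : (g 0 0 * g 1 1 - g 0 1 * g 1 0 : ℂ) = 1 := by exact_mod_cast hdet
    have hxyC : (x * (g 0 0 * e) + y * g 1 0 : ℂ) = 1 := by exact_mod_cast hxy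
    generalize (((g 1 0).gcd N : ℕ) : ℂ) = m at *
    rw [hNC]
    simp only [t]
    push_cast
    congr 1
    · field_simp
      linear_combination g 0 1 * hxyC + y * hdetC
    · field_simp
      rw [mul_comm (c' : ℂ) m, ← hcC]
      linear_combination g 1 1 * hxyC - x * e * hdetC

lemma map_mem_gammaPlus (hS : IsExactDivisorGroup N S) {h : SL(2, ℤ)}
    (hh : h ∈ CongruenceSubgroup.Gamma0 N) :
    Matrix.SpecialLinearGroup.map (Int.castRingHom ℝ) h ∈ gammaPlus hS := by
  obtain ⟨c, hc⟩ := (ZMod.intCast_zmod_eq_zero_iff_dvd _ N).mp (CongruenceSubgroup.Gamma0_mem.mp hh)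
  refine mem_GammaPlus hS hS.one_mem (a := h 0 0) (b := h 0 1) (c := c) (d := h 1 1) (by simp)
    (by simp) ?_ (by simp)
  simp [hc, mul_comm]

lemma map_smul (h : SL(2, ℤ)) (z : ℍ) :
    Matrix.SpecialLinearGroup.map (Int.castRingHom ℝ) h • z = h • z := by
  ext
  rw [coe_smul_eq, coe_smul_int]
  simp

lemma exists_mem_strip_smul_eq (hS : IsExactDivisorGroup N S) (τ : ℍ) :
    ∃ i : SL(2, ℤ) ⧸ CongruenceSubgroup.Gamma0 N, ∃ z ∈ strip, ∃ γ ∈ gammaPlus hS,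
      γ • ((i.out)⁻¹ • z) = τ := by
  obtain ⟨g, hg⟩ := ModularGroup.exists_smul_mem_fd τ
  obtain ⟨h, hh⟩ := QuotientGroup.mk_out_eq_mul (CongruenceSubgroup.Gamma0 N) g
  refine ⟨(g : SL(2, ℤ) ⧸ CongruenceSubgroup.Gamma0 N), g • τ, ?_,
    Matrix.SpecialLinearGroup.map (Int.castRingHom ℝ) h, map_mem_gammaPlus hS h.2, ?_⟩
  · refine ⟨hg.2, ?_⟩
    have h1 := ModularGroup.three_le_four_mul_im_sq_of_mem_fd hg
    have h2 := (g • τ).im_pos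
    nlinarith
  · rw [hh, mul_inv_rev, map_smul, smul_smul, smul_smul]
    simp

lemma exists_smul_eq_of_eq_add_int (hS : IsExactDivisorGroup N S) {τ₁ τ₂ : ℍ} {n : ℤ}
    (h : (τ₁ : ℂ) = τ₂ + n) : ∃ γ ∈ gammaPlus hS, γ • τ₁ = τ₂ := by
  obtain ⟨γ, hγ⟩ := exists_isAtkinLehner (N := N) (e := 1) (a := 1) (b := -n) (c := 0) (d := 1)
    (one_dvd N) one_pos (by simp)
  refine ⟨γ, mem_gammaPlus_of_isAtkinLehner hS hS.one_mem hγ, ?_⟩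
  ext
  rw [coe_smul_of_sqrt one_pos hγ.h00 hγ.h01 hγ.h10 hγ.h11, h]
  simp

theorem isPrincipalModulus_etaInv (hP : IsLevel N P) (hS : IsExactDivisorGroup N S)
    (hsum : (P.map fun p => (p.1 : ℤ) * p.2).sum = 24) (hinv : ∀ e ∈ S, IsInvariant N e P)
    (hcusp : ∀ m, m ∣ N → cuspOrder N P m ≤ 0 ∨ ∃ e ∈ S, m * e = N) :
    IsPrincipalModulus (GammaPlus N S) (etaInv P) := by
  have : NeZero N := ⟨hS.ne_zero⟩
  have hT : MDifferentiable 𝓘(ℂ) 𝓘(ℂ) (etaInv P) := mdifferentiable_etaFrame_inv hP.pos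
  have hseries : HasPoleSeries (etaInv P) _ := hasPoleSeries_etaFrame_inv hP.pos hsum
  have hΓ : ∀ γ ∈ gammaPlus hS, ∀ τ, etaInv P (γ • τ) = etaInv P τ :=
    fun γ hγ τ => etaInv_smul_of_mem hP hS hinv hγ τ
  refine ⟨hT, hΓ, injective_and_cofinite_range (Γ := gammaPlus hS)
    (g := fun (i : SL(2, ℤ) ⧸ CongruenceSubgroup.Gamma0 N) z => i.out⁻¹ • z)
    (isClosed_GammaPlus hS) hT hΓ (fun i => ?_)
    (exists_mem_strip_smul_eq hS) (fun i => ?_) hseries.tendsto ?_⟩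
  · exact continuous_const_smul (Matrix.SpecialLinearGroup.mapGL ℝ i.out⁻¹)
  · rcases hcusp ((i.out⁻¹ 1 0).gcd N) (Int.natCast_dvd_natCast.mp (Int.gcd_dvd_right _ _)) with
      h | ⟨e, he, h⟩
    · exact Or.inl (exists_tendsto_etaInv_smul hP hS.ne_zero _ h)
    · exact Or.inr (exists_smul_eq_smul_of_gcd_mul_eq hS he _ h)
  · obtain ⟨Y, hY⟩ := hseries.exists_injective
    refine ⟨Y, fun τ₁ τ₂ h₁ h₂ h => ?_⟩
    obtain ⟨n, hn⟩ := hY τ₁ τ₂ h₁ h₂ h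
    exact exists_smul_eq_of_eq_add_int hS hn

end PrincipalModulus

/-! ### Uniqueness of the principal modulus -/

section Uniqueness

variable {N d : ℕ} {S : Set ℕ}

lemma tendsto_e2_nhds : Tendsto (fun τ : ℍ => e2 τ) atImInfty (𝓝 0) :=
  tendsto_e2_atImInfty.mono_right nhdsWithin_le_nhds

lemma tendsto_of_hasOqExpansion {T : ℍ → ℂ} (h : HasOqExpansion d T) :
    Tendsto (fun τ : ℍ => T τ - (e2 τ)⁻¹ + d) atImInfty (𝓝 0) := by
  have h1 : Tendsto (fun τ : ℍ => ((T τ - e2 (-(τ : ℂ)) + d) * e2 (-(τ : ℂ))) * e2 τ)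
      atImInfty (𝓝 0) := by
    have := Asymptotics.IsBigO.mul h
      (Asymptotics.isBigO_refl (fun τ : ℍ => e2 τ) atImInfty).norm_right
    exact this.trans_tendsto (by simpa using tendsto_e2_nhds.norm)
  refine h1.congr fun τ => ?_
  rw [e2_neg, mul_assoc, inv_mul_cancel₀ (e2_ne_zero _), mul_one]

lemma exists_hasPoleSeries {T : ℍ → ℂ} (hT : MDifferentiable 𝓘(ℂ) 𝓘(ℂ) T)
    (hper : ∀ τ : ℍ, T ((1 : ℝ) +ᵥ τ) = T τ) (h : HasOqExpansion d T) :
    ∃ Φ, HasPoleSeries T Φ := by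
  let F : ℍ → ℂ := fun τ => e2 τ * T τ
  have hlim : Tendsto F atImInfty (𝓝 1) := by
    have h1 := (tendsto_e2_nhds.mul (tendsto_of_hasOqExpansion h)).add
      ((tendsto_e2_nhds.mul_const (d : ℂ)).const_sub 1)
    simp only [zero_mul, mul_zero, zero_add, sub_zero] at h1
    refine h1.congr fun τ => ?_
    have := e2_ne_zero τ
    simp only [F]
    field_simp
    ring
  have hF : MDifferentiable 𝓘(ℂ) 𝓘(ℂ) F := by
    rw [UpperHalfPlane.mdifferentiable_iff] at hT ⊢
    refine (differentiable_e2.differentiableOn.mul hT).congr fun z hz => ?_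
    simp [F, ofComplex_apply_of_im_pos hz]
  have hperF : ∀ τ : ℍ, F ((1 : ℝ) +ᵥ τ) = F τ := fun τ => by
    have := e2_add_intCast τ 1
    simp only [F, hper, coe_vadd]
    rw [add_comm, Complex.ofReal_one, ← Int.cast_one (R := ℂ), this]
  have hperF' := periodic_comp_ofComplex hperF
  have hbdd : IsBoundedAtImInfty F := hlim.isBigO_one ℝ
  have ha := analyticAt_cuspFunction_zero one_pos hperF' hF hbdd
  have heq : ∀ τ : ℍ, cuspFunction 1 F (e2 τ) = F τ := fun τ => by
    rw [e2_eq_qParam, eq_cuspFunction τ one_ne_zero hperF']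
  refine ⟨cuspFunction 1 F, ha, ?_, fun τ => ?_⟩
  · exact tendsto_nhds_unique ((ha.continuousAt.tendsto.comp tendsto_e2_nhds).congr heq) hlim
  · rw [heq, inv_mul_cancel_left₀ (e2_ne_zero _)]

/-- A bounded holomorphic function on `ℍ` invariant under a subgroup of finite index of `SL₂(ℤ)`
is constant. -/
lemma exists_eq_const_of_bounded {Γ : Subgroup SL(2, ℤ)} [Γ.FiniteIndex] {f : ℍ → ℂ}
    (hf : MDifferentiable 𝓘(ℂ) 𝓘(ℂ) f) (hinv : ∀ γ ∈ Γ, ∀ τ, f (γ • τ) = f τ)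
    {C : ℝ} (hC : ∀ τ, ‖f τ‖ ≤ C) : ∃ c, ∀ τ, f τ = c := by
  let F : ModularForm (Γ.map (Matrix.SpecialLinearGroup.mapGL ℝ)) 0 :=
    { toFun := f
      slash_action_eq' := by
        rintro _ ⟨γ, hγ, rfl⟩
        ext τ
        simpa [ModularForm.slash_def, UpperHalfPlane.σ] using! hinv γ hγ τ
      holo' := hf
      bdd_at_cusps' := fun {c} _ g _ => by
        rw [isBoundedAtImInfty_iff]
        refine ⟨C * |g.det.val|⁻¹, 0, fun z _ => ?_⟩
        simpa [ModularForm.slash_def] using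
          mul_le_mul_of_nonneg_right (hC (g • z)) (by positivity) }
  obtain ⟨c, hc⟩ := ModularForm.eq_const_of_weight_zero F
  exact ⟨c, fun τ => congrFun hc τ⟩

/-- Off the orbit of a neighbourhood of `i∞`, a principal modulus is bounded. -/
lemma exists_norm_le_of_forall_smul {Γ : Set SL(2, ℝ)} {T : ℍ → ℂ} {Φ : ℂ → ℂ}
    (hT : IsPrincipalModulus Γ T) (hΦ : HasPoleSeries T Φ) (Y : ℝ) :
    ∃ C : ℝ, ∀ τ : ℍ, (∀ γ ∈ Γ, (γ • τ).im ≤ Y) → ‖T τ‖ ≤ C := by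
  have h := hΦ.exists_surjective Y
  rw [Metric.cobounded_eq_cocompact.symm, ← comap_norm_atTop, eventually_comap] at h
  obtain ⟨C, hC⟩ := eventually_atTop.mp h
  refine ⟨C, fun τ hτ => le_of_not_ge fun hlt => ?_⟩
  obtain ⟨σ, hσ, hTσ⟩ := hC _ hlt (T τ) rfl
  obtain ⟨γ, hγ, rfl⟩ := hT.2.2.1 τ σ hTσ.symm
  exact (hτ γ hγ).not_gt hσ

theorem IsPrincipalModulus.eq_of_hasOqExpansion (hS : IsExactDivisorGroup N S) {T T' : ℍ → ℂ}
    (hT : IsPrincipalModulus (GammaPlus N S) T) (hTd : HasOqExpansion d T)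
    (hT' : IsPrincipalModulus (GammaPlus N S) T') (hTd' : HasOqExpansion d T') : T' = T := by
  have : NeZero N := ⟨hS.ne_zero⟩
  have hper : ∀ {f : ℍ → ℂ}, (∀ γ ∈ GammaPlus N S, ∀ τ : ℍ, f (γ • τ) = f τ) →
      ∀ τ : ℍ, f ((1 : ℝ) +ᵥ τ) = f τ := fun hf τ => by
    obtain ⟨γ, hγ, h⟩ := exists_smul_eq_of_eq_add_int hS (τ₁ := (1 : ℝ) +ᵥ τ) (τ₂ := τ) (n := 1)
      (by simp [add_comm])
    rw [← hf γ hγ, h]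
  obtain ⟨Φ, hΦ⟩ := exists_hasPoleSeries hT.1 (hper hT.2.1) hTd
  obtain ⟨Φ', hΦ'⟩ := exists_hasPoleSeries hT'.1 (hper hT'.2.1) hTd'
  have hlim : Tendsto (fun τ => T' τ - T τ) atImInfty (𝓝 0) := by
    have := (tendsto_of_hasOqExpansion hTd').sub (tendsto_of_hasOqExpansion hTd)
    rw [sub_zero] at this
    exact this.congr fun τ => by ring
  have hinv : ∀ γ ∈ GammaPlus N S, ∀ τ : ℍ, T' (γ • τ) - T (γ • τ) = T' τ - T τ :=
    fun γ hγ τ => by rw [hT.2.1 γ hγ, hT'.2.1 γ hγ]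
  obtain ⟨Y, hY⟩ := (atImInfty_mem _).mp
    (hlim.norm.eventually (gt_mem_nhds (by simp : ‖(0 : ℂ)‖ < 1)))
  obtain ⟨C, hC⟩ := exists_norm_le_of_forall_smul hT hΦ Y
  obtain ⟨C', hC'⟩ := exists_norm_le_of_forall_smul hT' hΦ' Y
  have hconst := exists_eq_const_of_bounded (Γ := CongruenceSubgroup.Gamma0 N)
    (f := fun τ => T' τ - T τ) (C := max 1 (C' + C)) (hT'.1.sub hT.1) ?_ ?_
  · obtain ⟨c, hc⟩ := hconst
    have hc0 : c = 0 := tendsto_nhds_unique (tendsto_const_nhds.congr fun τ => (hc τ).symm) hlim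
    funext τ
    exact sub_eq_zero.mp ((hc τ).trans hc0)
  · intro γ hγ τ
    have h := hinv _ (map_mem_gammaPlus hS hγ) τ
    rwa [map_smul] at h
  · intro τ
    by_cases h : ∃ γ ∈ GammaPlus N S, Y < (γ • τ).im
    · obtain ⟨γ, hγ, h⟩ := h
      rw [← hinv γ hγ τ]
      exact (le_of_lt (hY _ h.le)).trans (le_max_left _ _)
    · push Not at h
      exact (norm_sub_le _ _).trans ((add_le_add (hC' τ h) (hC τ h)).trans (le_max_right _ _))

end Uniqueness

/-! ### The Niemeier root systems -/

section RootSystems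

variable {X : List ADE}

/-- The exact divisors defining `Γ^X`. -/
def divisorsX (X : List ADE) : List ℕ :=
  if X.any ADE.isA then [1]
  else if X.any ADE.isD then [1, coxOf X / 2]
  else if X.any ADE.isE6 then [1, 4]
  else [1, 6, 10, 15]

/-- The numerical conditions on a frame shape `P` which make `1/η_P` a principal modulus for
`Γ₀(N)+S` with constant term `-d`, apart from the triviality of its multipliers. -/
structure IsAdmissible (N : ℕ) (S : List ℕ) (P : List (ℕ × ℤ)) (d : ℕ) : Prop where
  ne_zero : N ≠ 0
  one_mem : 1 ∈ S
  exact_divisor : ∀ e ∈ S, e ∣ N ∧ e.Coprime (N / e)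
  mul_mem : ∀ e ∈ S, ∀ f ∈ S, e * f / e.gcd f ^ 2 ∈ S
  pos_and_dvd : ∀ p ∈ P, 0 < p.1 ∧ p.1 ∣ N
  weight : (P.map fun p => p.2).sum = 0
  order_infty : (P.map fun p => (p.1 : ℤ) * p.2).sum = 24
  order_zero : (24 : ℤ) ∣ (P.map fun p => ((N / p.1 : ℕ) : ℤ) * p.2).sum
  square : IsSquare (P.map fun p : ℕ × ℤ => p.1 ^ p.2.natAbs).prod
  cusp : ∀ m ∈ List.range (N + 1), m ∣ N → cuspOrder N P m ≤ 0 ∨ ∃ e ∈ S, m * e = N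
  perm : ∀ e ∈ S, (P.map fun p => (p.1 * e / (p.1.gcd e) ^ 2, p.2)).Perm P
  constant : (P.map fun p => if p.1 = 1 then p.2 else 0).sum = -d

lemma isAdmissible_of_mem (hX : X ∈ NiemeierRootSystems) :
    IsAdmissible (coxOf X) (divisorsX X) (frameOf X) X.length := by
  constructor <;> revert X <;> decide +kernel

namespace IsAdmissible

variable {N d : ℕ} {S : List ℕ} {P : List (ℕ × ℤ)}

lemma isLevel (h : IsAdmissible N S P d) : IsLevel N P where
  pos p hp := (h.pos_and_dvd p hp).1
  dvd p hp := (h.pos_and_dvd p hp).2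
  weight := h.weight
  order_infty := by rw [h.order_infty]
  order_zero := h.order_zero
  square := h.square

lemma isExactDivisorGroup (h : IsAdmissible N S P d) : IsExactDivisorGroup N {e | e ∈ S} where
  ne_zero := h.ne_zero
  one_mem := h.one_mem
  dvd e he := (h.exact_divisor e he).1
  coprime e he := (h.exact_divisor e he).2
  mul_mem := h.mul_mem

lemma isPrincipalModulus (h : IsAdmissible N S P d) (hinv : ∀ e ∈ S, IsInvariant N e P) :
    IsPrincipalModulus (GammaPlus N {e | e ∈ S}) (etaInv P) :=
  isPrincipalModulus_etaInv h.isLevel h.isExactDivisorGroup h.order_infty hinv fun m hm =>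
    h.cusp m (List.mem_range.mpr
      (Nat.lt_succ_of_le (Nat.le_of_dvd (Nat.pos_of_ne_zero h.ne_zero) hm))) hm

lemma hasOqExpansion (h : IsAdmissible N S P d) : HasOqExpansion d (etaInv P) := by
  refine (hasPoleSeries_etaFrame_inv h.isLevel.pos h.order_infty).hasOqExpansion ?_
  rw [(frameSeries_zero_and_analyticAt_and_deriv h.isLevel.pos).2.2, h.constant]
  simp

end IsAdmissible

lemma coxOf_of_isD (hX : X ∈ NiemeierRootSystems) (hA : ¬ X.any ADE.isA) (hD : X.any ADE.isD) :
    coxOf X = 2 * (coxOf X / 2) ∧ Odd (coxOf X / 2) := by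
  revert X
  decide +kernel

lemma coxOf_of_isE6 (hX : X ∈ NiemeierRootSystems) (hA : ¬ X.any ADE.isA) (hD : ¬ X.any ADE.isD)
    (hE : X.any ADE.isE6) : coxOf X = 12 ∧ cuspOrder 12 (frameOf X) 2 = 0 := by
  revert X
  decide +kernel

lemma coxOf_of_not_isE6 (hX : X ∈ NiemeierRootSystems) (hA : ¬ X.any ADE.isA)
    (hD : ¬ X.any ADE.isD) (hE : ¬ X.any ADE.isE6) : coxOf X = 30 := by
  revert X
  decide +kernel

lemma GammaX_eq (hX : X ∈ NiemeierRootSystems) :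
    GammaX X = GammaPlus (coxOf X) {e | e ∈ divisorsX X} := by
  rw [GammaX, divisorsX]
  split_ifs with hA hD hE
  · simp
  · congr
    ext
    simp
  · rw [(coxOf_of_isE6 hX hA hD hE).1]
    congr
    ext
    simp
  · rw [coxOf_of_not_isE6 hX hA hD hE]
    congr
    ext
    simp

lemma isInvariant_of_mem (hX : X ∈ NiemeierRootSystems) :
    ∀ e ∈ divisorsX X, IsInvariant (coxOf X) e (frameOf X) := by
  have h := isAdmissible_of_mem hX
  have hP := h.isLevel
  have hperm := h.perm
  rw [divisorsX] at hperm ⊢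
  split_ifs at hperm ⊢ with hA hD hE
  · simpa using isInvariant_one _ _
  · obtain ⟨h2, hodd⟩ := coxOf_of_isD hX hA hD
    have hhalf := hperm (coxOf X / 2) (by simp)
    generalize coxOf X / 2 = n at h2 hodd hhalf ⊢
    rw [h2] at hP ⊢
    simpa [isInvariant_one] using isInvariant_half hP hodd hhalf
  · obtain ⟨h12, h0⟩ := coxOf_of_isE6 hX hA hD hE
    rw [h12] at hP ⊢
    simpa [isInvariant_one] using isInvariant_twelve_four hP (hperm 4 (by simp)) h0
  · rw [coxOf_of_not_isE6 hX hA hD hE] at hP ⊢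
    intro e he
    exact isInvariant_thirty hP (hperm 6 (by simp)) (hperm 15 (by simp)) (by simpa using he)

end RootSystems

end Niemeier

/-- for each of the 23 Niemeier root systems `X`, the function
`T^X = 1/η_{π^X}` is the unique principal modulus for `Γ^X` satisfying
`T^X = q⁻¹ - d^X + O(q)` as `τ → i∞`, where `d^X` is the number of irreducible
components of `X`. -/
theorem statement0 (X : List ADE) (hX : X ∈ NiemeierRootSystems) :
    (IsPrincipalModulus (GammaX X) (TX X) ∧ HasOqExpansion X.length (TX X)) ∧
    ∀ T' : UpperHalfPlane → ℂ, IsPrincipalModulus (GammaX X) T' →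
      HasOqExpansion X.length T' → T' = TX X := by
  have h := Niemeier.isAdmissible_of_mem hX
  have hT := h.isPrincipalModulus (Niemeier.isInvariant_of_mem hX)
  rw [Niemeier.GammaX_eq hX]
  exact ⟨⟨hT, h.hasOqExpansion⟩, fun T' hT' hd' =>
    Niemeier.IsPrincipalModulus.eq_of_hasOqExpansion h.isExactDivisorGroup hT h.hasOqExpansion
      hT' hd'⟩
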